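/- arXiv:1107.4373 — 3 statements merged into one kernel-verified Lean document; each statement's English description precedes it below -/
import Mathlib

section
/- For any skew shape A, there is exactly one LR filling of A with content rows(A), and exactly one LR filling of A with content cols(A)^t; in particular, the Schur functions indexed by rows(A) and by cols(A)^t each appear with coefficient exactly 1 in the Schur expansion of the skew Schur function s_A. -/
/-- A skew shape `outer / inner`: the boxes of the Young diagram of `outer`
that are not boxes of the Young diagram of `inner`. -/
structure SkewShape where
  outer : YoungDiagram
  inner : YoungDiagram
  inner_le : inner ≤ outer

namespace SkewShape

/-- The set of boxes of a skew shape. -/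
def cells (A : SkewShape) : Finset (ℕ × ℕ) := A.outer.cells \ A.inner.cells

/-- The size of a skew shape is its number of boxes. -/
def size (A : SkewShape) : ℕ := A.cells.card

/-- The length of row `i` of a skew shape. -/
def rowLen (A : SkewShape) (i : ℕ) : ℕ := (A.cells.filter fun c => c.1 = i).card

/-- The length of column `j` of a skew shape. -/
def colLen (A : SkewShape) (j : ℕ) : ℕ := (A.cells.filter fun c => c.2 = j).card

/-- The set of indices of nonempty rows. -/
def rowSet (A : SkewShape) : Finset ℕ := A.cells.image Prod.fst

/-- The set of indices of nonempty columns. -/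
def colSet (A : SkewShape) : Finset ℕ := A.cells.image Prod.snd

/-- The number of nonempty rows. -/
def numRows (A : SkewShape) : ℕ := A.rowSet.card

/-- The number of nonempty columns. -/
def numCols (A : SkewShape) : ℕ := A.colSet.card

/-- `rows A`: the multiset of lengths of the nonempty rows of `A`
(equivalently, that sequence sorted into weakly decreasing order). -/
def rows (A : SkewShape) : Multiset ℕ := A.rowSet.val.map A.rowLen

/-- `cols A`: the multiset of lengths of the nonempty columns of `A`. -/
def cols (A : SkewShape) : Multiset ℕ := A.colSet.val.map A.colLen

/-- A skew shape is disconnected if its boxes can be split into two nonempty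
parts such that no box of one part shares a row or a column with a box of the
other part. -/
def Disconnected (A : SkewShape) : Prop :=
  ∃ B C : Finset (ℕ × ℕ), B.Nonempty ∧ C.Nonempty ∧ B ∪ C = A.cells ∧ B ∩ C = ∅ ∧
    ∀ b ∈ B, ∀ c ∈ C, b.1 ≠ c.1 ∧ b.2 ≠ c.2

/-- A skew shape is connected if it is nonempty and not disconnected. -/
def Connected (A : SkewShape) : Prop := A.cells.Nonempty ∧ ¬ A.Disconnected

/-- A ribbon is a connected skew shape containing no 2×2 block of boxes. -/
def Ribbon (A : SkewShape) : Prop :=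
  A.Connected ∧ ∀ i j : ℕ, ¬ ((i, j) ∈ A.cells ∧ (i, j + 1) ∈ A.cells ∧
    (i + 1, j) ∈ A.cells ∧ (i + 1, j + 1) ∈ A.cells)

/-- The lengths of any two nonempty rows differ by at most one. -/
def RowEquitable (A : SkewShape) : Prop :=
  ∀ i ∈ A.rowSet, ∀ i' ∈ A.rowSet, A.rowLen i ≤ A.rowLen i' + 1

/-- The lengths of any two nonempty columns differ by at most one. -/
def ColEquitable (A : SkewShape) : Prop :=
  ∀ j ∈ A.colSet, ∀ j' ∈ A.colSet, A.colLen j ≤ A.colLen j' + 1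

/-- Equitable: both row equitable and column equitable. -/
def Equitable (A : SkewShape) : Prop := A.RowEquitable ∧ A.ColEquitable

/-- A filling of a skew shape is semistandard if its entries are positive
integers, weakly increasing along rows and strictly increasing down columns. -/
def IsSsyt (A : SkewShape) (T : ℕ × ℕ → ℕ) : Prop :=
  (∀ c ∈ A.cells, 1 ≤ T c) ∧
  (∀ i j j', (i, j) ∈ A.cells → (i, j') ∈ A.cells → j ≤ j' → T (i, j) ≤ T (i, j')) ∧
  (∀ i i' j, (i, j) ∈ A.cells → (i', j) ∈ A.cells → i < i' → T (i, j) < T (i', j))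

end SkewShape

/-- `c` comes weakly before `d` in the reverse reading order (right to left
along rows, rows top to bottom). -/
def ReadsBefore (c d : ℕ × ℕ) : Prop := c.1 < d.1 ∨ (c.1 = d.1 ∧ d.2 ≤ c.2)

instance : DecidableRel ReadsBefore := fun c d => by unfold ReadsBefore; infer_instance

namespace SkewShape

/-- The number of boxes of `A` filled with the entry `k` by the filling `T`. -/
def content (A : SkewShape) (T : ℕ × ℕ → ℕ) (k : ℕ) : ℕ :=
  (A.cells.filter fun c => T c = k).card

/-- A Littlewood--Richardson filling: a semistandard filling such that every
prefix of the reverse reading word contains at least as many `k`'s as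
`(k+1)`'s, for every positive `k`. -/
def IsLR (A : SkewShape) (T : ℕ × ℕ → ℕ) : Prop :=
  A.IsSsyt T ∧ ∀ d ∈ A.cells, ∀ k : ℕ,
    (A.cells.filter fun c => T c = k + 2 ∧ ReadsBefore c d).card ≤
    (A.cells.filter fun c => T c = k + 1 ∧ ReadsBefore c d).card

end SkewShape

/-- The `i`-th largest part (0-indexed) of a multiset of natural numbers,
i.e. the `i`-th entry of the multiset sorted into weakly decreasing order. -/
def part (lam : Multiset ℕ) (i : ℕ) : ℕ := (lam.sort (· ≥ ·)).getD i 0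

namespace SkewShape

/-- The support of a skew shape `A`: the set of partitions `lam` (multisets of
positive integers) for which there exists an LR filling of `A` of content `lam`. -/
def supp (A : SkewShape) : Set (Multiset ℕ) :=
  {lam | 0 ∉ lam ∧ ∃ T : ℕ × ℕ → ℕ, A.IsLR T ∧ ∀ i : ℕ, A.content T (i + 1) = part lam i}

/-- The set of LR fillings of `A` of content `lam` (normalized to vanish
outside the boxes of `A`). -/
def LRset (A : SkewShape) (lam : Multiset ℕ) : Set ((ℕ × ℕ) → ℕ) :=
  {T | A.IsLR T ∧ (∀ c, c ∉ A.cells → T c = 0) ∧ ∀ i : ℕ, A.content T (i + 1) = part lam i}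

/-- `s_A − s_B` is Schur-positive: for every partition, the number of LR
fillings of `B` of that content is at most the number for `A`. -/
def SchurPosDiff (A B : SkewShape) : Prop :=
  ∀ lam : Multiset ℕ, (B.LRset lam).ncard ≤ (A.LRset lam).ncard

end SkewShape

/-- The sum of the `k` largest parts of a multiset of natural numbers. -/
def psum (lam : Multiset ℕ) (k : ℕ) : ℕ := ((lam.sort (· ≥ ·)).take k).sum

/-- Dominance order: `DomLe lam mu` means `lam ⊴ mu`, i.e. for every `k` the
sum of the `k` largest parts of `lam` is at most that of `mu`. -/
def DomLe (lam mu : Multiset ℕ) : Prop := ∀ k : ℕ, psum lam k ≤ psum mu k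

/-- The conjugate (transpose) of a partition given as a multiset: its parts
are the numbers `#{x ∈ lam | x ≥ j}` for `j = 1, 2, …`. -/
def conj (lam : Multiset ℕ) : Multiset ℕ :=
  ((Finset.range lam.sum).val.map fun j => Multiset.card (lam.filter fun x => j + 1 ≤ x)).filter
    fun y => y ≠ 0

/-! The `(conj A.cols)` filling numbers each column by `1, 2, 3, …` from the top. It is entrywise
minimal among semistandard fillings, and two fillings with the same content which are entrywise
comparable are equal.

For `A.rows`, number instead, for each `q`, the boxes having exactly `q` boxes to their right by
`1, 2, 3, …` from the top. Given an LR filling `T`, let the rank of a box be the number of equal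
entries read weakly before it. The lattice condition makes ranks increase strictly along a row from
right to left, so a box of arm length `q` has rank at least `q + 1`. The sum of all ranks depends
only on the content of `T`, and for the numbering above the bound is attained everywhere. Hence the
ranks of an LR filling of content `A.rows` are forced, the lattice condition matches each entry
`k + 2` with an entry `k + 1` of the same arm length higher up, and so `T` is entrywise bounded by
the numbering. -/

section LinearRank

variable {α : Type*} (r : α → α → Prop) [DecidableRel r] (s : Finset α)

theorem card_filter_rel_lt_card_filter_rel [IsPartialOrder α r] {a b : α} (hb : b ∈ s)
    (hab : r a b) (hne : a ≠ b) :
    (s.filter (r · a)).card < (s.filter (r · b)).card := by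
  refine Finset.card_lt_card (Finset.ssubset_iff_of_subset ?_ |>.2 ⟨b, ?_, ?_⟩)
  · exact Finset.monotone_filter_right s fun c _ hca ↦ trans_of r hca hab
  · exact Finset.mem_filter.2 ⟨hb, refl_of r b⟩
  · exact fun hba ↦ hne (antisymm_of r hab (Finset.mem_filter.1 hba).2)

variable [IsLinearOrder α r]

theorem injOn_card_filter_rel : Set.InjOn (fun a ↦ (s.filter (r · a)).card) s := by
  intro a ha b hb hab
  by_contra hne
  rcases total_of r a b with h | h
  · exact (card_filter_rel_lt_card_filter_rel r s hb h hne).ne hab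
  · exact (card_filter_rel_lt_card_filter_rel r s ha h (Ne.symm hne)).ne' hab

theorem image_card_filter_rel :
    s.image (fun a ↦ (s.filter (r · a)).card) = Finset.Icc 1 s.card := by
  refine Finset.eq_of_subset_of_card_le (Finset.image_subset_iff.2 fun a ha ↦ ?_) ?_
  · exact Finset.mem_Icc.2 ⟨Finset.card_pos.2 ⟨a, Finset.mem_filter.2 ⟨ha, refl_of r a⟩⟩,
      Finset.card_filter_le _ _⟩
  · rw [Finset.card_image_of_injOn (injOn_card_filter_rel r s), Nat.card_Icc,
      Nat.add_sub_cancel]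

end LinearRank

section Count

variable (p : ℕ → Prop) [DecidablePred p]

theorem lt_count_iff_exists {k n : ℕ} :
    k < Nat.count p n ↔ ∃ m < n, p m ∧ Nat.count p m = k := by
  constructor
  · intro h
    have hk : ∀ hf : (Set.ofPred p).Finite, k < hf.toFinset.card :=
      fun hf ↦ h.trans_le (Nat.count_le_card hf n)
    exact ⟨Nat.nth p k, Nat.nth_lt_of_lt_count h, Nat.nth_mem k hk, Nat.count_nth hk⟩
  · rintro ⟨m, hmn, hm, rfl⟩
    exact Nat.count_strict_mono hm hmn

theorem lt_count_iff_of_antitone (hp : Antitone p) {k n : ℕ} :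
    k < Nat.count p n ↔ k < n ∧ p k := by
  have hcount {m : ℕ} (hm : p m) : Nat.count p m = m :=
    Nat.count_iff_forall.2 fun _ hlt ↦ hp hlt.le hm
  rw [lt_count_iff_exists]
  constructor
  · rintro ⟨m, hmn, hm, rfl⟩
    rw [hcount hm]
    exact ⟨hmn, hm⟩
  · exact fun ⟨hkn, hk⟩ ↦ ⟨k, hkn, hk, hcount hk⟩

end Count

section Parts

theorem lt_getD_iff_lt_countP {l : List ℕ} (hl : l.Pairwise (· ≥ ·)) (q k : ℕ) :
    q < l.getD k 0 ↔ k < l.countP (q < ·) := by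
  induction l generalizing k with
  | nil => simp
  | cons x l ih =>
    obtain ⟨hx, hl⟩ := List.pairwise_cons.1 hl
    by_cases hqx : q < x
    · cases k with
      | zero => simp [hqx]
      | succ k => simpa [hqx] using ih hl k
    · have hzero : l.countP (q < ·) = 0 :=
        List.countP_eq_zero.2 fun y hy ↦ by simpa using (hx y hy).trans (not_lt.1 hqx)
      cases k with
      | zero => simp [hqx, hzero]
      | succ k => simpa [hqx, hzero] using ih hl k

theorem lt_part_iff (lam : Multiset ℕ) (q k : ℕ) :
    q < part lam k ↔ k < lam.countP (q < ·) := by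
  rw [part, lt_getD_iff_lt_countP (lam.pairwise_sort (· ≥ ·)), ← Multiset.coe_countP,
    Multiset.sort_eq]

theorem countP_conj (lam : Multiset ℕ) (q : ℕ) :
    (conj lam).countP (q < ·) = Nat.count (fun j ↦ q < lam.countP (j < ·)) lam.sum := by
  rw [conj, Multiset.countP_filter, Multiset.countP_map, Nat.count_eq_card_filter_range,
    Finset.card_def, Finset.filter_val]
  refine congrArg Multiset.card (Multiset.filter_congr fun j _ ↦ ?_)
  rw [Multiset.countP_eq_card_filter]
  simp only [Nat.succ_le_iff]
  omega

theorem part_conj (lam : Multiset ℕ) (k : ℕ) : part (conj lam) k = lam.countP (k < ·) := by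
  refine eq_of_forall_lt_iff fun q ↦ ?_
  have hanti : Antitone fun j ↦ q < lam.countP (j < ·) := fun i j hij hq ↦ by
    refine hq.trans_le ?_
    simp only [Multiset.countP_eq_card_filter]
    exact Multiset.card_le_card (Multiset.monotone_filter_right _ fun x hx ↦ hij.trans_lt hx)
  have hbound (hq : q < lam.countP (k < ·)) : k < lam.sum := by
    obtain ⟨x, hx, hkx⟩ := Multiset.countP_pos.1 (pos_of_gt hq)
    exact hkx.trans_le (Multiset.le_sum_of_mem hx)
  rw [lt_part_iff, countP_conj, lt_count_iff_of_antitone _ hanti]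
  exact and_iff_right_of_imp hbound

end Parts

instance : IsLinearOrder (ℕ × ℕ) ReadsBefore where
  refl c := Or.inr ⟨rfl, le_rfl⟩
  trans c d e := by unfold ReadsBefore; omega
  antisymm c d hcd hdc := by unfold ReadsBefore at hcd hdc; ext <;> omega
  total c d := by unfold ReadsBefore; omega

namespace SkewShape

variable (A : SkewShape)

section Boxes

theorem mk_mem_cells_iff_rowLen {i j : ℕ} :
    (i, j) ∈ A.cells ↔ A.inner.rowLen i ≤ j ∧ j < A.outer.rowLen i := by
  rw [cells, Finset.mem_sdiff, YoungDiagram.mem_cells, YoungDiagram.mem_cells,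
    YoungDiagram.mem_iff_lt_rowLen, YoungDiagram.mem_iff_lt_rowLen, not_lt, and_comm]

theorem mk_mem_cells_iff_colLen {i j : ℕ} :
    (i, j) ∈ A.cells ↔ A.inner.colLen j ≤ i ∧ i < A.outer.colLen j := by
  rw [cells, Finset.mem_sdiff, YoungDiagram.mem_cells, YoungDiagram.mem_cells,
    YoungDiagram.mem_iff_lt_colLen, YoungDiagram.mem_iff_lt_colLen, not_lt, and_comm]

theorem rowLen_eq_sub (i : ℕ) : A.rowLen i = A.outer.rowLen i - A.inner.rowLen i := by
  have hrow : A.cells.filter (fun c ↦ c.1 = i) =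
      {i} ×ˢ Finset.Ico (A.inner.rowLen i) (A.outer.rowLen i) := by
    ext ⟨a, b⟩
    simp only [Finset.mem_filter, mk_mem_cells_iff_rowLen, Finset.mem_product,
      Finset.mem_singleton, Finset.mem_Ico]
    grind
  rw [rowLen, hrow, Finset.card_product, Finset.card_singleton, Nat.card_Ico, one_mul]

theorem colLen_eq_sub (j : ℕ) : A.colLen j = A.outer.colLen j - A.inner.colLen j := by
  have hcol : A.cells.filter (fun c ↦ c.2 = j) =
      Finset.Ico (A.inner.colLen j) (A.outer.colLen j) ×ˢ {j} := by
    ext ⟨a, b⟩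
    simp only [Finset.mem_filter, mk_mem_cells_iff_colLen, Finset.mem_product,
      Finset.mem_singleton, Finset.mem_Ico]
    grind
  rw [colLen, hcol, Finset.card_product, Finset.card_singleton, Nat.card_Ico, mul_one]

theorem fst_lt_outer_colLen_zero {c : ℕ × ℕ} (hc : c ∈ A.cells) : c.1 < A.outer.colLen 0 :=
  ((A.mk_mem_cells_iff_colLen).1 hc).2.trans_le (A.outer.colLen_anti 0 c.2 (Nat.zero_le _))

end Boxes

section Content

variable {A} {T T' : ℕ × ℕ → ℕ} {lam : Multiset ℕ}

theorem map_cells_eq_of_mem_LRset (hT : T ∈ A.LRset lam) (hT' : T' ∈ A.LRset lam) :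
    A.cells.val.map T = A.cells.val.map T' := by
  have hcount (S : ℕ × ℕ → ℕ) (k : ℕ) : (A.cells.val.map S).count k = A.content S k := by
    simp only [Multiset.count_map, content, Finset.card_def, Finset.filter_val, eq_comm]
  have hzero {S : ℕ × ℕ → ℕ} (hS : S ∈ A.LRset lam) : A.content S 0 = 0 :=
    Finset.card_eq_zero.2 <| Finset.filter_eq_empty_iff.2 fun c hc ↦
      Nat.ne_of_gt (hS.1.1.1 c hc)
  ext k
  rw [hcount, hcount]
  cases k with
  | zero => rw [hzero hT, hzero hT']
  | succ k => rw [hT.2.2, hT'.2.2]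

theorem eq_of_mem_LRset_of_le (hT : T ∈ A.LRset lam) (hT' : T' ∈ A.LRset lam)
    (hle : ∀ c ∈ A.cells, T c ≤ T' c) : T = T' := by
  have hsum : ∑ c ∈ A.cells, T c = ∑ c ∈ A.cells, T' c :=
    congrArg Multiset.sum (map_cells_eq_of_mem_LRset hT hT')
  funext c
  by_cases hc : c ∈ A.cells
  · exact (Finset.sum_eq_sum_iff_of_le hle).1 hsum c hc
  · rw [hT.2.1 c hc, hT'.2.1 c hc]

end Content

section PrefixCount

variable (T : ℕ × ℕ → ℕ)

/-- The number of entries `k` of the filling `T` read weakly before the box `d`. For `k = T d` this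
is the rank of `d` among the boxes with the same entry, counted from `1`. -/
def prefixCount (k : ℕ) (d : ℕ × ℕ) : ℕ :=
  (A.cells.filter fun c ↦ T c = k ∧ ReadsBefore c d).card

variable {A T}

theorem prefixCount_le_content (k : ℕ) (d : ℕ × ℕ) : A.prefixCount T k d ≤ A.content T k :=
  Finset.card_le_card (Finset.monotone_filter_right _ fun _ _ h ↦ h.1)

theorem prefixCount_lt_prefixCount {c d : ℕ × ℕ} (hd : d ∈ A.cells) (hcd : ReadsBefore c d)
    (hne : c ≠ d) : A.prefixCount T (T d) c < A.prefixCount T (T d) d := by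
  simpa only [prefixCount, Finset.filter_filter] using
    card_filter_rel_lt_card_filter_rel ReadsBefore (A.cells.filter (T · = T d))
      (Finset.mem_filter.2 ⟨hd, rfl⟩) hcd hne

variable (A T) in
theorem image_prefixCount (k : ℕ) :
    (A.cells.filter (T · = k)).image (A.prefixCount T k) = Finset.Icc 1 (A.content T k) := by
  have h := image_card_filter_rel ReadsBefore (A.cells.filter (T · = k))
  simp only [Finset.filter_filter] at h
  exact h

variable (A T) in
theorem injOn_prefixCount (k : ℕ) :
    Set.InjOn (A.prefixCount T k) (A.cells.filter (T · = k)) := by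
  have h := injOn_card_filter_rel ReadsBefore (A.cells.filter (T · = k))
  simp only [Finset.filter_filter] at h
  exact h

variable (A T) in
theorem sum_prefixCount : ∑ c ∈ A.cells, A.prefixCount T (T c) c =
    ∑ k ∈ A.cells.image T, ∑ m ∈ Finset.Icc 1 (A.content T k), m := by
  rw [← Finset.sum_fiberwise_of_maps_to fun c ↦ Finset.mem_image_of_mem T]
  refine Finset.sum_congr rfl fun k _ ↦ ?_
  rw [← image_prefixCount, Finset.sum_image (injOn_prefixCount A T k)]
  exact Finset.sum_congr rfl fun c hc ↦ by rw [(Finset.mem_filter.1 hc).2]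

theorem sum_prefixCount_eq_of_mem_LRset {T' : ℕ × ℕ → ℕ} {lam : Multiset ℕ}
    (hT : T ∈ A.LRset lam) (hT' : T' ∈ A.LRset lam) :
    ∑ c ∈ A.cells, A.prefixCount T (T c) c = ∑ c ∈ A.cells, A.prefixCount T' (T' c) c := by
  have himage : A.cells.image T = A.cells.image T' :=
    congrArg Multiset.toFinset (map_cells_eq_of_mem_LRset hT hT')
  rw [sum_prefixCount, sum_prefixCount, himage]
  refine Finset.sum_congr rfl fun k hk ↦ ?_
  obtain ⟨c, hc, rfl⟩ := Finset.mem_image.1 hk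
  obtain ⟨m, hm⟩ := Nat.exists_eq_add_of_le' (hT'.1.1.1 c hc)
  rw [hm, hT.2.2, hT'.2.2]

theorem IsLR.prefixCount_le_prefixCount (hT : A.IsLR T) {d : ℕ × ℕ} (hd : d ∈ A.cells) {k l : ℕ}
    (hk : 1 ≤ k) (hkl : k ≤ l) : A.prefixCount T l d ≤ A.prefixCount T k d := by
  induction l, hkl using Nat.le_induction with
  | base => exact le_rfl
  | succ l hkl ih =>
    obtain ⟨m, rfl⟩ := Nat.exists_eq_add_of_le' (hk.trans hkl)
    exact (hT.2 d hd m).trans ih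

/- The fibres of `g` split the reading word into subwords with distinct letters, in each of which
every `l` is preceded by a `k`. -/
theorem prefixCount_le_prefixCount_of_injOn {β : Type*} {g : ℕ × ℕ → β} {k l : ℕ}
    (hinj : Set.InjOn g (A.cells.filter (T · = l)))
    (hpred : ∀ c ∈ A.cells, T c = l → ∃ e ∈ A.cells, T e = k ∧ g e = g c ∧ ReadsBefore e c)
    (d : ℕ × ℕ) : A.prefixCount T l d ≤ A.prefixCount T k d := by
  have hinj' : Set.InjOn g (A.cells.filter fun c ↦ T c = l ∧ ReadsBefore c d) :=
    hinj.mono (Finset.coe_subset.2 (Finset.monotone_filter_right _ fun _ _ h ↦ h.1))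
  classical
  rw [prefixCount, ← Finset.card_image_of_injOn hinj']
  refine (Finset.card_le_card (Finset.image_subset_iff.2 fun c hc ↦ ?_)).trans
    (Finset.card_image_le (f := g))
  obtain ⟨hc, hTc, hcd⟩ := Finset.mem_filter.1 hc
  obtain ⟨e, he, hTe, hge, hec⟩ := hpred c hc hTc
  exact Finset.mem_image.2 ⟨e, Finset.mem_filter.2 ⟨he, hTe, trans_of _ hec hcd⟩, hge⟩

end PrefixCount

section ColumnFilling

/-- The filling of each column by `1, 2, 3, …` from top to bottom (and `0` outside of `A`): the
unique LR filling whose content is the conjugate of `A.cols`. -/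
def colFill (c : ℕ × ℕ) : ℕ :=
  if c ∈ A.cells then c.1 - A.inner.colLen c.2 + 1 else 0

variable {A}

theorem colFill_mk_of_mem {i j : ℕ} (hc : (i, j) ∈ A.cells) :
    A.colFill (i, j) = i - A.inner.colLen j + 1 :=
  if_pos hc

theorem mk_mem_cells_and_colFill_eq_succ_iff {i j k : ℕ} :
    (i, j) ∈ A.cells ∧ A.colFill (i, j) = k + 1 ↔ k < A.colLen j ∧ i = A.inner.colLen j + k := by
  rw [colLen_eq_sub]
  constructor
  · rintro ⟨hc, hfill⟩
    rw [colFill_mk_of_mem hc] at hfill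
    rw [mk_mem_cells_iff_colLen] at hc
    omega
  · rintro ⟨hk, rfl⟩
    have hc : (A.inner.colLen j + k, j) ∈ A.cells := by
      rw [mk_mem_cells_iff_colLen]
      omega
    exact ⟨hc, by rw [colFill_mk_of_mem hc, Nat.add_sub_cancel_left]⟩

theorem injOn_snd_colFill (k : ℕ) :
    Set.InjOn Prod.snd (A.cells.filter (A.colFill · = k + 1) : Set (ℕ × ℕ)) := by
  rintro ⟨i, j⟩ hc ⟨i', j'⟩ hd rfl
  simp only [Finset.coe_filter, Set.mem_ofPred_eq, mk_mem_cells_and_colFill_eq_succ_iff] at hc hd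
  rw [hc.2, hd.2]

variable (A)

theorem isSsyt_colFill : A.IsSsyt A.colFill := by
  refine ⟨fun ⟨i, j⟩ hc ↦ ?_, fun i j j' hc hd hjj' ↦ ?_, fun i i' j hc hd hii' ↦ ?_⟩
  · rw [colFill_mk_of_mem hc]
    exact Nat.le_add_left 1 _
  · rw [colFill_mk_of_mem hc, colFill_mk_of_mem hd]
    have := A.inner.colLen_anti j j' hjj'
    omega
  · rw [colFill_mk_of_mem hc, colFill_mk_of_mem hd]
    rw [mk_mem_cells_iff_colLen] at hc
    omega

theorem isLR_colFill : A.IsLR A.colFill := by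
  refine ⟨A.isSsyt_colFill, fun d _ k ↦
    prefixCount_le_prefixCount_of_injOn (injOn_snd_colFill (k + 1)) ?_ d⟩
  rintro ⟨i, j⟩ hc hfill
  obtain ⟨hk, rfl⟩ := mk_mem_cells_and_colFill_eq_succ_iff.1 ⟨hc, hfill⟩
  obtain ⟨he, hfill'⟩ := (mk_mem_cells_and_colFill_eq_succ_iff (A := A)).2
    ⟨(Nat.lt_succ_self k).trans hk, rfl⟩
  exact ⟨_, he, hfill', rfl, Or.inl (by simp only; omega)⟩

theorem content_colFill (k : ℕ) : A.content A.colFill (k + 1) = part (conj A.cols) k := by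
  have himage : (A.cells.filter (A.colFill · = k + 1)).image Prod.snd =
      A.colSet.filter (k < A.colLen ·) := by
    ext j
    simp only [Finset.mem_image, Finset.mem_filter, colSet, Prod.exists, exists_eq_right,
      mk_mem_cells_and_colFill_eq_succ_iff]
    exact ⟨fun hk ↦ ⟨⟨_, (mk_mem_cells_and_colFill_eq_succ_iff.2 ⟨hk, rfl⟩).1⟩, hk⟩, And.right⟩
  rw [content, ← Finset.card_image_of_injOn (injOn_snd_colFill k), himage, part_conj, cols,
    Multiset.countP_map, Finset.card_def, Finset.filter_val]

theorem colFill_mem_LRset : A.colFill ∈ A.LRset (conj A.cols) :=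
  ⟨A.isLR_colFill, fun _ hc ↦ if_neg hc, A.content_colFill⟩

variable {A}

theorem IsSsyt.colFill_le {T : ℕ × ℕ → ℕ} (hT : A.IsSsyt T) {c : ℕ × ℕ} (hc : c ∈ A.cells) :
    A.colFill c ≤ T c := by
  have hlower (n j : ℕ) (h : (A.inner.colLen j + n, j) ∈ A.cells) :
      n < T (A.inner.colLen j + n, j) := by
    induction n with
    | zero => exact hT.1 _ h
    | succ n ih =>
      have habove : (A.inner.colLen j + n, j) ∈ A.cells := by
        rw [mk_mem_cells_iff_colLen] at h ⊢
        omega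
      exact (Nat.succ_le_of_lt (ih habove)).trans_lt (hT.2.2 _ _ _ habove h (Nat.lt_succ_self _))
  obtain ⟨i, j⟩ := c
  obtain ⟨n, rfl⟩ := Nat.exists_eq_add_of_le (A.mk_mem_cells_iff_colLen.1 hc).1
  rw [colFill_mk_of_mem hc, Nat.add_sub_cancel_left]
  exact hlower n j hc

variable (A) in
theorem LRset_conj_cols : A.LRset (conj A.cols) = {A.colFill} :=
  Set.eq_singleton_iff_unique_mem.2 ⟨A.colFill_mem_LRset, fun _ hT ↦
    (eq_of_mem_LRset_of_le A.colFill_mem_LRset hT fun _ ↦ hT.1.1.colFill_le).symm⟩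

end ColumnFilling

section RowFilling

/-- The arm length of a box of `A`: the number of boxes to its right in the same row. -/
def arm (c : ℕ × ℕ) : ℕ := A.outer.rowLen c.1 - (c.2 + 1)

/-- The number of rows strictly above row `i` which contain a box of arm length `q`, that is, which
have length greater than `q`. -/
def longRowsAbove (q i : ℕ) : ℕ := Nat.count (q < A.rowLen ·) i

/-- The filling which, for each `q`, numbers the boxes of arm length `q` by `1, 2, 3, …` from top to
bottom (and is `0` outside of `A`): the unique LR filling of content `A.rows`. -/
def rowFill (c : ℕ × ℕ) : ℕ :=
  if c ∈ A.cells then A.longRowsAbove (A.arm c) c.1 + 1 else 0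

variable {A}

theorem rowFill_of_mem {c : ℕ × ℕ} (hc : c ∈ A.cells) :
    A.rowFill c = A.longRowsAbove (A.arm c) c.1 + 1 :=
  if_pos hc

theorem exists_mem_cells_arm_eq_iff {i q : ℕ} :
    (∃ c ∈ A.cells, c.1 = i ∧ A.arm c = q) ↔ q < A.rowLen i := by
  rw [rowLen_eq_sub]
  constructor
  · rintro ⟨⟨i, j⟩, hc, rfl, rfl⟩
    rw [mk_mem_cells_iff_rowLen] at hc
    simp only [arm]
    omega
  · intro hq
    refine ⟨(i, A.outer.rowLen i - (q + 1)), ?_, rfl, ?_⟩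
    · rw [mk_mem_cells_iff_rowLen]
      omega
    · simp only [arm]
      omega

theorem arm_lt_rowLen {c : ℕ × ℕ} (hc : c ∈ A.cells) : A.arm c < A.rowLen c.1 :=
  exists_mem_cells_arm_eq_iff.1 ⟨c, hc, rfl, rfl⟩

theorem eq_of_fst_eq_of_arm_eq {c d : ℕ × ℕ} (hc : c ∈ A.cells) (hd : d ∈ A.cells)
    (hrow : c.1 = d.1) (harm : A.arm c = A.arm d) : c = d := by
  obtain ⟨i, j⟩ := c
  obtain ⟨i', j'⟩ := d
  obtain rfl : i = i' := hrow
  rw [mk_mem_cells_iff_rowLen] at hc hd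
  simp only [arm] at harm
  rw [Prod.mk.injEq]
  omega

theorem longRowsAbove_anti {q q' : ℕ} (hq : q ≤ q') (i : ℕ) :
    A.longRowsAbove q' i ≤ A.longRowsAbove q i :=
  Nat.count_mono_left fun _ _ h ↦ hq.trans_lt h

theorem lt_longRowsAbove_iff {k q i : ℕ} :
    k < A.longRowsAbove q i ↔ ∃ c ∈ A.cells, c.1 < i ∧ A.arm c = q ∧ A.rowFill c = k + 1 := by
  rw [longRowsAbove, lt_count_iff_exists]
  constructor
  · rintro ⟨_, hlt, hlong, rfl⟩
    obtain ⟨c, hc, rfl, rfl⟩ := exists_mem_cells_arm_eq_iff.2 hlong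
    exact ⟨c, hc, hlt, rfl, rowFill_of_mem hc⟩
  · rintro ⟨c, hc, hlt, rfl, hfill⟩
    rw [rowFill_of_mem hc, Nat.succ_inj] at hfill
    exact ⟨c.1, hlt, arm_lt_rowLen hc, hfill⟩

theorem rowFill_lt_rowFill {c d : ℕ × ℕ} (hc : c ∈ A.cells) (hd : d ∈ A.cells)
    (hrow : c.1 < d.1) (harm : A.arm d ≤ A.arm c) : A.rowFill c < A.rowFill d := by
  rw [rowFill_of_mem hc, rowFill_of_mem hd, Nat.add_lt_add_iff_right]
  calc A.longRowsAbove (A.arm c) c.1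
    _ < A.longRowsAbove (A.arm c) d.1 := Nat.count_strict_mono (arm_lt_rowLen hc) hrow
    _ ≤ A.longRowsAbove (A.arm d) d.1 := longRowsAbove_anti harm d.1

theorem injOn_arm_rowFill (k : ℕ) : Set.InjOn A.arm (A.cells.filter (A.rowFill · = k)) := by
  intro c hc d hd harm
  obtain ⟨hc, hfillc⟩ := Finset.mem_filter.1 hc
  obtain ⟨hd, hfilld⟩ := Finset.mem_filter.1 hd
  rcases lt_trichotomy c.1 d.1 with hrow | hrow | hrow
  · exact absurd (hfillc.trans hfilld.symm) (rowFill_lt_rowFill hc hd hrow harm.ge).ne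
  · exact eq_of_fst_eq_of_arm_eq hc hd hrow harm
  · exact absurd (hfilld.trans hfillc.symm) (rowFill_lt_rowFill hd hc hrow harm.le).ne

variable (A)

theorem isSsyt_rowFill : A.IsSsyt A.rowFill := by
  refine ⟨fun c hc ↦ ?_, fun i j j' hc hd hjj' ↦ ?_, fun i i' j hc hd hii' ↦ ?_⟩
  · rw [rowFill_of_mem hc]
    exact Nat.le_add_left 1 _
  · rw [rowFill_of_mem hc, rowFill_of_mem hd]
    exact Nat.succ_le_succ (longRowsAbove_anti
      (Nat.sub_le_sub_left (Nat.succ_le_succ hjj') _) i)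
  · exact rowFill_lt_rowFill hc hd hii'
      (Nat.sub_le_sub_right (A.outer.rowLen_anti i i' hii'.le) _)

theorem isLR_rowFill : A.IsLR A.rowFill := by
  refine ⟨A.isSsyt_rowFill, fun d _ k ↦
    prefixCount_le_prefixCount_of_injOn (injOn_arm_rowFill (k + 2)) (fun c hc hfill ↦ ?_) d⟩
  rw [rowFill_of_mem hc, Nat.succ_inj] at hfill
  obtain ⟨e, he, hrow, harm, hfill'⟩ := lt_longRowsAbove_iff.1 (hfill.ge : k < _)
  exact ⟨e, he, hfill', harm, Or.inl hrow⟩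

theorem countP_rows (q : ℕ) :
    A.rows.countP (q < ·) = A.longRowsAbove q (A.outer.colLen 0) := by
  rw [rows, Multiset.countP_map, longRowsAbove, Nat.count_eq_card_filter_range,
    ← Finset.filter_val, ← Finset.card_def]
  congr 1
  ext i
  simp only [Finset.mem_filter, Finset.mem_range, and_congr_left_iff]
  intro hlong
  obtain ⟨c, hc, rfl, -⟩ := exists_mem_cells_arm_eq_iff.2 hlong
  exact iff_of_true (Finset.mem_image_of_mem _ hc) (A.fst_lt_outer_colLen_zero hc)

theorem content_rowFill (k : ℕ) : A.content A.rowFill (k + 1) = part A.rows k := by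
  have himage : (A.cells.filter (A.rowFill · = k + 1)).image A.arm =
      Finset.range (part A.rows k) := by
    ext q
    rw [Finset.mem_range, lt_part_iff, countP_rows, lt_longRowsAbove_iff, Finset.mem_image]
    constructor
    · rintro ⟨c, hc, harm⟩
      obtain ⟨hc, hfill⟩ := Finset.mem_filter.1 hc
      exact ⟨c, hc, A.fst_lt_outer_colLen_zero hc, harm, hfill⟩
    · exact fun ⟨c, hc, _, harm, hfill⟩ ↦ ⟨c, Finset.mem_filter.2 ⟨hc, hfill⟩, harm⟩
  rw [content, ← Finset.card_image_of_injOn (injOn_arm_rowFill (k + 1)), himage,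
    Finset.card_range]

theorem rowFill_mem_LRset : A.rowFill ∈ A.LRset A.rows :=
  ⟨A.isLR_rowFill, fun _ hc ↦ if_neg hc, A.content_rowFill⟩

variable {A}

theorem prefixCount_rowFill_le {c : ℕ × ℕ} (hc : c ∈ A.cells) :
    A.prefixCount A.rowFill (A.rowFill c) c ≤ A.arm c + 1 := by
  rw [← Finset.card_range (A.arm c + 1)]
  refine Finset.card_le_card_of_injOn A.arm (fun e he ↦ ?_)
    ((injOn_arm_rowFill (A.rowFill c)).mono
      (Finset.coe_subset.2 (Finset.monotone_filter_right _ fun _ _ h ↦ h.1)))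
  obtain ⟨he, hfill, hrow | ⟨hrow, hcol⟩⟩ := Finset.mem_filter.1 he
  · by_contra harm
    rw [Finset.mem_coe, Finset.mem_range, Nat.lt_succ_iff, not_le] at harm
    exact (rowFill_lt_rowFill he hc hrow harm.le).ne hfill
  · rw [Finset.mem_coe, Finset.mem_range, Nat.lt_succ_iff, arm, arm, hrow]
    exact Nat.sub_le_sub_left (Nat.succ_le_succ hcol) _

variable {T : ℕ × ℕ → ℕ}

theorem IsLR.arm_lt_prefixCount (hT : A.IsLR T) {c : ℕ × ℕ} (hc : c ∈ A.cells) :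
    A.arm c < A.prefixCount T (T c) c := by
  induction harm : A.arm c generalizing c with
  | zero => exact Finset.card_pos.2 ⟨c, Finset.mem_filter.2 ⟨hc, rfl, refl_of _ c⟩⟩
  | succ q ih =>
    obtain ⟨i, j⟩ := c
    simp only [arm] at harm
    have hright : (i, j + 1) ∈ A.cells := by
      rw [mk_mem_cells_iff_rowLen] at hc ⊢
      omega
    calc q + 1
      _ ≤ A.prefixCount T (T (i, j + 1)) (i, j + 1) :=
        ih hright (by simp only [arm]; omega)
      _ ≤ A.prefixCount T (T (i, j)) (i, j + 1) :=
        hT.prefixCount_le_prefixCount hright (hT.1.1 _ hc)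
          (hT.1.2.1 i j (j + 1) hc hright (Nat.le_succ j))
      _ < A.prefixCount T (T (i, j)) (i, j) :=
        prefixCount_lt_prefixCount hc (Or.inr ⟨rfl, Nat.le_succ j⟩) (by simp)

theorem prefixCount_eq_arm_add_one (hT : T ∈ A.LRset A.rows) {c : ℕ × ℕ} (hc : c ∈ A.cells) :
    A.prefixCount T (T c) c = A.arm c + 1 := by
  have hlower : ∀ c ∈ A.cells, A.arm c + 1 ≤ A.prefixCount T (T c) c :=
    fun _ ↦ hT.1.arm_lt_prefixCount
  have hsum : ∑ c ∈ A.cells, (A.arm c + 1) = ∑ c ∈ A.cells, A.prefixCount T (T c) c := by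
    refine (Finset.sum_le_sum hlower).antisymm ?_
    rw [sum_prefixCount_eq_of_mem_LRset hT A.rowFill_mem_LRset]
    exact Finset.sum_le_sum fun _ ↦ prefixCount_rowFill_le
  exact ((Finset.sum_eq_sum_iff_of_le hlower).1 hsum c hc).symm

theorem exists_lt_fst_of_eq_add_two (hT : T ∈ A.LRset A.rows) {c : ℕ × ℕ} (hc : c ∈ A.cells)
    {k : ℕ} (hTc : T c = k + 2) :
    ∃ e ∈ A.cells, T e = k + 1 ∧ A.arm e = A.arm c ∧ e.1 < c.1 := by
  have hrank : A.arm c + 1 ≤ A.prefixCount T (k + 1) c := by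
    rw [← prefixCount_eq_arm_add_one hT hc, hTc]
    exact hT.1.2 c hc k
  have hmem : A.arm c + 1 ∈ (A.cells.filter (T · = k + 1)).image (A.prefixCount T (k + 1)) := by
    rw [image_prefixCount, Finset.mem_Icc]
    exact ⟨Nat.le_add_left 1 _, hrank.trans (prefixCount_le_content _ _)⟩
  obtain ⟨e, he, hranke⟩ := Finset.mem_image.1 hmem
  obtain ⟨he, hTe⟩ := Finset.mem_filter.1 he
  have harm : A.arm e = A.arm c := by
    rw [← hTe, prefixCount_eq_arm_add_one hT he] at hranke
    exact Nat.succ_injective hranke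
  have hne : c ≠ e := by
    rintro rfl
    omega
  have hnot : ¬ ReadsBefore c e := fun hce ↦ by
    have hlt := prefixCount_lt_prefixCount (T := T) he hce hne
    rw [hTe, hranke] at hlt
    exact hlt.not_ge hrank
  refine ⟨e, he, hTe, harm, (not_lt.1 fun h ↦ hnot (Or.inl h)).lt_of_ne fun hrow ↦ ?_⟩
  exact hne (eq_of_fst_eq_of_arm_eq hc he hrow.symm harm.symm)

theorem le_rowFill (hT : T ∈ A.LRset A.rows) {c : ℕ × ℕ} (hc : c ∈ A.cells) :
    T c ≤ A.rowFill c := by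
  obtain ⟨n, hn⟩ := Nat.exists_eq_add_of_le' (hT.1.1.1 c hc)
  induction n generalizing c with
  | zero => exact hn.trans_le (A.isSsyt_rowFill.1 c hc)
  | succ k ih =>
    obtain ⟨e, he, hTe, harm, hrow⟩ := exists_lt_fst_of_eq_add_two hT hc hn
    calc T c = T e + 1 := by rw [hn, hTe]
      _ ≤ A.rowFill e + 1 := Nat.succ_le_succ (ih he hTe)
      _ ≤ A.rowFill c := rowFill_lt_rowFill he hc hrow harm.ge

variable (A) in
theorem LRset_rows : A.LRset A.rows = {A.rowFill} :=
  Set.eq_singleton_iff_unique_mem.2 ⟨A.rowFill_mem_LRset, fun _ hT ↦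
    eq_of_mem_LRset_of_le hT A.rowFill_mem_LRset fun _ ↦ le_rowFill hT⟩

end RowFilling

end SkewShape

/-- For any skew shape `A`, there is exactly one LR filling of `A`
with content `rows A`, and exactly one LR filling of `A` with content
`(cols A)ᵗ`; in particular, the Schur functions indexed by `rows A` and by
`(cols A)ᵗ` each appear with coefficient exactly 1 in the Schur expansion of
`s_A`. -/
theorem unique_LR_filling_extreme_contents (A : SkewShape) :
    (∃! T : ℕ × ℕ → ℕ, T ∈ A.LRset A.rows) ∧
    (∃! T : ℕ × ℕ → ℕ, T ∈ A.LRset (conj A.cols)) ∧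
    (A.LRset A.rows).ncard = 1 ∧ (A.LRset (conj A.cols)).ncard = 1 := by
  simp only [A.LRset_rows, A.LRset_conj_cols, Set.mem_singleton_iff, existsUnique_eq,
    Set.ncard_singleton, and_self]
end

section
/- If A and B are skew shapes of the same size with supp(B) ⊆ supp(A), then rows(A) ⊴ rows(B) and cols(A) ⊴ cols(B) in dominance order. -/
/-!
Reading a filling `T` of `A` cell by cell, number the boxes carrying each entry in the order in
which they are read. If `T` is an LR filling then two boxes in the same row get different numbers,
so at most `min m ℓ` boxes of a row of length `ℓ` have number at most `m`. Dually, two boxes in the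
same column have different entries. Summed over all rows, respectively columns, this says that every
`ν ∈ supp A` satisfies `rows A ⊴ ν ⊴ (cols A)ᵗ`.

Both bounds lie in `supp A`. Numbering each column from top to bottom gives an LR filling of content
`(cols A)ᵗ`. Numbering each row from right to left, and then numbering from top to bottom the boxes
that received the same number, gives one of content `(rows A)ᵗᵗ = rows A`. Hence `supp B ⊆ supp A`
forces `rows A ⊴ rows B` and `(cols B)ᵗ ⊴ (cols A)ᵗ`, and conjugation reverses dominance.
-/

/-! ### Partitions, conjugation and dominance -/

section Partition

lemma le_getD_iff_lt_length_filter {l : List ℕ} (hl : l.Pairwise (· ≥ ·)) {p : ℕ} (hp : 0 < p)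
    (i : ℕ) : p ≤ l.getD i 0 ↔ i < (l.filter (p ≤ ·)).length := by
  induction l generalizing i with
  | nil => simp [hp.ne']
  | cons a l ih =>
    obtain ⟨ha, hl⟩ := List.pairwise_cons.1 hl
    by_cases hpa : p ≤ a
    · cases i with
      | zero => simp [hpa]
      | succ i =>
        rw [List.getD_cons_succ, ih hl, List.filter_cons_of_pos (by simpa using hpa),
          List.length_cons, Nat.succ_lt_succ_iff]
    · have hsmall : l.filter (p ≤ ·) = [] := by
        simp only [List.filter_eq_nil_iff, decide_eq_true_eq]
        exact fun x hx hpx => hpa (hpx.trans (ha x hx))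
      cases i with
      | zero => simp [hpa, hsmall]
      | succ i =>
        rw [List.getD_cons_succ, ih hl, List.filter_cons_of_neg (by simpa using hpa), hsmall]
        simp

lemma le_part_iff (lam : Multiset ℕ) {p : ℕ} (hp : 0 < p) (i : ℕ) :
    p ≤ part lam i ↔ i < Multiset.card (lam.filter (p ≤ ·)) := by
  rw [part, le_getD_iff_lt_length_filter (Multiset.pairwise_sort lam _) hp]
  conv_rhs => rw [← Multiset.sort_eq lam (· ≥ ·), Multiset.filter_coe, Multiset.coe_card]

lemma part_le_sum (lam : Multiset ℕ) (i : ℕ) : part lam i ≤ lam.sum := by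
  rcases Nat.eq_zero_or_pos (part lam i) with h0 | hpos
  · simp [h0]
  · have hcard := (Nat.zero_le i).trans_lt ((le_part_iff lam hpos i).1 le_rfl)
    obtain ⟨x, hx⟩ := Multiset.card_pos_iff_exists_mem.1 hcard
    obtain ⟨hmem, hle⟩ := Multiset.mem_filter.1 hx
    exact hle.trans (Multiset.le_sum_of_mem hmem)

lemma map_part_range_card (lam : Multiset ℕ) :
    (Finset.range (Multiset.card lam)).val.map (part lam) = lam := by
  conv_rhs => rw [← Multiset.sort_eq lam (· ≥ ·)]
  rw [Finset.range_val, Multiset.range, Multiset.map_coe]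
  congr 1
  refine List.ext_getElem (by simp) fun i _ hi => ?_
  simp [part, List.getElem?_eq_getElem hi]

lemma psum_eq_sum_part (lam : Multiset ℕ) (k : ℕ) :
    psum lam k = ∑ i ∈ Finset.range k, part lam i := by
  induction k with
  | zero => simp [psum]
  | succ k ih =>
    rw [Finset.sum_range_succ, ← ih, psum, psum, part, List.take_add_one, List.sum_append,
      List.getD_eq_getElem?_getD]
    cases (lam.sort (· ≥ ·))[k]? <;> simp

lemma zero_notMem_conj (lam : Multiset ℕ) : 0 ∉ conj lam := by
  simp [conj]

lemma card_filter_conj (lam : Multiset ℕ) (i : ℕ) :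
    Multiset.card ((conj lam).filter (i + 1 ≤ ·)) = part lam i := by
  have hrange : (Finset.range lam.sum).filter
      (fun j => i + 1 ≤ Multiset.card (lam.filter (j + 1 ≤ ·))) = Finset.range (part lam i) := by
    ext j
    have hpart := le_part_iff lam j.succ_pos i
    have hsum := part_le_sum lam i
    simp only [Finset.mem_filter, Finset.mem_range]
    lia
  rw [conj, Multiset.filter_filter, Multiset.filter_map, Multiset.card_map,
    ← Finset.card_range (part lam i), ← hrange]
  refine congrArg Multiset.card (Multiset.filter_congr fun j _ => ?_)
  simp only [Function.comp_apply]
  lia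

lemma part_conj_s6 (lam : Multiset ℕ) (j : ℕ) :
    part (conj lam) j = Multiset.card (lam.filter (j + 1 ≤ ·)) := by
  refine eq_of_forall_le_iff fun p => ?_
  cases p with
  | zero => simp
  | succ p =>
    rw [le_part_iff _ p.succ_pos, card_filter_conj, ← Nat.succ_le_iff, le_part_iff _ j.succ_pos,
      Nat.succ_le_iff]

lemma part_conj_conj (lam : Multiset ℕ) (i : ℕ) : part (conj (conj lam)) i = part lam i := by
  rw [part_conj_s6, card_filter_conj]

lemma psum_conj (lam : Multiset ℕ) (m : ℕ) : psum (conj lam) m = (lam.map (min m)).sum := by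
  simp only [psum_eq_sum_part, part_conj_s6]
  induction lam using Multiset.induction_on with
  | empty => simp
  | cons x lam ih =>
    have hcount : (∑ j ∈ Finset.range m, if j + 1 ≤ x then 1 else 0) = min m x := by
      rw [← Finset.card_filter, ← Finset.card_range (min m x)]
      congr 1
      ext j
      simp only [Finset.mem_filter, Finset.mem_range]
      lia
    have hcons (j : ℕ) : Multiset.card ((x ::ₘ lam).filter (j + 1 ≤ ·)) =
        (if j + 1 ≤ x then 1 else 0) + Multiset.card (lam.filter (j + 1 ≤ ·)) := by
      split_ifs with h
      · rw [Multiset.filter_cons_of_pos _ h, Multiset.card_cons, add_comm]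
      · rw [Multiset.filter_cons_of_neg _ h, zero_add]
    simp only [hcons, Finset.sum_add_distrib, hcount, ih, Multiset.map_cons, Multiset.sum_cons]

lemma sum_sort (lam : Multiset ℕ) : (lam.sort (· ≥ ·)).sum = lam.sum := by
  rw [← Multiset.sum_coe, Multiset.sort_eq]

lemma sum_map_sort (lam : Multiset ℕ) (f : ℕ → ℕ) :
    ((lam.sort (· ≥ ·)).map f).sum = (lam.map f).sum := by
  rw [← Multiset.sum_coe, ← Multiset.map_coe, Multiset.sort_eq]

lemma sum_take_add_sum_map_min_le (l : List ℕ) (k m : ℕ) :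
    (l.take k).sum + (l.map (min m)).sum ≤ k * m + l.sum := by
  induction l generalizing k with
  | nil => simp
  | cons a l ih =>
    cases k with
    | zero =>
      have := ih 0
      simp only [List.take_zero, List.sum_nil, List.map_cons, List.sum_cons] at this ⊢
      lia
    | succ k =>
      have := ih k
      simp only [List.take_succ_cons, List.map_cons, List.sum_cons, Nat.succ_mul]
      lia

lemma sum_take_add_sum_map_min_getD {l : List ℕ} (hl : l.Pairwise (· ≥ ·)) (k : ℕ) :
    (l.take k).sum + (l.map (min (l.getD k 0))).sum = k * l.getD k 0 + l.sum := by
  induction l generalizing k with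
  | nil => simp
  | cons a l ih =>
    obtain ⟨ha, hl⟩ := List.pairwise_cons.1 hl
    cases k with
    | zero =>
      have hmin : l.map (min a) = l :=
        (List.map_congr_left fun x hx => min_eq_right (ha x hx)).trans l.map_id
      simp [hmin]
    | succ k =>
      have hle : l.getD k 0 ≤ a := by
        rcases lt_or_ge k l.length with hk | hk
        · rw [List.getD_eq_getElem l 0 hk]
          exact ha _ (List.getElem_mem hk)
        · rw [List.getD_eq_default l 0 hk]
          exact a.zero_le
      have := ih hl k
      simp only [List.take_succ_cons, List.map_cons, List.sum_cons, List.getD_cons_succ,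
        Nat.succ_mul, min_eq_left hle]
      lia

/-- Boxes lying both in the first `k` rows and in the first `m` columns fit into a `k × m`
rectangle. -/
lemma psum_add_psum_conj_le (lam : Multiset ℕ) (k m : ℕ) :
    psum lam k + psum (conj lam) m ≤ k * m + lam.sum := by
  rw [psum_conj, ← sum_map_sort, ← sum_sort lam]
  exact sum_take_add_sum_map_min_le _ k m

lemma psum_add_psum_conj_part (lam : Multiset ℕ) (k : ℕ) :
    psum lam k + psum (conj lam) (part lam k) = k * part lam k + lam.sum := by
  rw [psum_conj, ← sum_map_sort, ← sum_sort lam]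
  exact sum_take_add_sum_map_min_getD (Multiset.pairwise_sort lam _) k

lemma domLe_of_domLe_conj {lam mu : Multiset ℕ} (hsum : lam.sum = mu.sum)
    (h : DomLe (conj mu) (conj lam)) : DomLe lam mu := by
  intro k
  have hlam := psum_add_psum_conj_le lam k (part mu k)
  have hmu := psum_add_psum_conj_part mu k
  have hconj := h (part mu k)
  lia

end Partition

/-! ### Fibers of a map on a finite set -/

section Fibers

open Finset

variable {α β : Type*} [DecidableEq β] {s : Finset α} {g : α → β}

/-- The partition formed by the cardinalities of the nonempty fibers of `g` on `s`. For `s` the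
boxes of a skew shape this is `rows`, `cols` or the content of a filling, when `g` is the row index,
the column index or the filling. -/
def fiberCards (s : Finset α) (g : α → β) : Multiset ℕ :=
  (s.image g).val.map fun b => #{a ∈ s | g a = b}

/-- `f` numbers the elements of each fiber of `g` on `s` by `1, 2, …, n`, where `n` is the
cardinality of the fiber. It is enough to ask for injectivity and for values in this range. -/
structure IsFiberNumbering (s : Finset α) (g : α → β) (f : α → ℕ) : Prop where
  injOn : Set.InjOn (fun a => (g a, f a)) s
  pos : ∀ a ∈ s, 0 < f a
  le_card : ∀ a ∈ s, f a ≤ #{x ∈ s | g x = g a}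

lemma sum_fiberCards (s : Finset α) (g : α → β) : (fiberCards s g).sum = #s :=
  (card_eq_sum_card_image g s).symm

lemma zero_notMem_fiberCards (s : Finset α) (g : α → β) : 0 ∉ fiberCards s g := by
  simp only [fiberCards, Multiset.mem_map, mem_val, not_exists, not_and, Finset.card_ne_zero]
  intro b hb
  obtain ⟨a, ha, hab⟩ := mem_image.1 hb
  exact ⟨a, mem_filter.2 ⟨ha, hab⟩⟩

lemma eq_fiberCards_of_part {f : α → ℕ} {lam : Multiset ℕ} (hlam : 0 ∉ lam)
    (hpos : ∀ a ∈ s, 0 < f a) (hpart : ∀ i, #{a ∈ s | f a = i + 1} = part lam i) :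
    lam = fiberCards s f := by
  have hlt (i : ℕ) : i < Multiset.card lam ↔ i + 1 ∈ s.image f := by
    have hone : lam.filter (1 ≤ ·) = lam :=
      Multiset.filter_eq_self.2 fun x hx => Nat.one_le_iff_ne_zero.2 (ne_of_mem_of_not_mem hx hlam)
    rw [← hone, ← le_part_iff lam one_pos, ← hpart, Nat.one_le_iff_ne_zero, Finset.card_ne_zero]
    simp [Finset.Nonempty]
  have himage : s.image f = (range (Multiset.card lam)).map (addRightEmbedding 1) := by
    ext k
    simp only [mem_map, mem_range, hlt, addRightEmbedding_apply]
    refine ⟨fun hk => ?_, fun ⟨_, hi, hik⟩ => hik ▸ hi⟩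
    obtain ⟨a, ha, rfl⟩ := mem_image.1 hk
    exact ⟨f a - 1, by rwa [Nat.sub_add_cancel (hpos a ha)], Nat.sub_add_cancel (hpos a ha)⟩
  rw [fiberCards, himage, map_val, Multiset.map_map]
  simp only [Function.comp_def, addRightEmbedding_apply, hpart]
  exact (map_part_range_card lam).symm

/-- Each of the `m` values `1, …, m` is taken by `f` at most once on every fiber of `g`. -/
lemma sum_card_fiber_le_psum_conj {f : α → ℕ} (hinj : Set.InjOn (fun a => (g a, f a)) s) (m : ℕ) :
    ∑ i ∈ range m, #{a ∈ s | f a = i + 1} ≤ psum (conj (fiberCards s g)) m := by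
  set t := {a ∈ s | f a ∈ Ico 1 (m + 1)} with ht
  have hsum : ∑ i ∈ range m, #{a ∈ s | f a = i + 1} = #t := by
    rw [ht, ← sum_card_fiberwise_eq_card_filter, sum_Ico_eq_sum_range]
    simp [add_comm]
  have hmaps : Set.MapsTo g t (s.image g) := fun a ha => mem_image_of_mem g (mem_filter.1 ha).1
  rw [hsum, psum_conj, fiberCards, Multiset.map_map, card_eq_sum_card_fiberwise hmaps]
  refine sum_le_sum fun b _ => le_min ?_ (card_le_card (filter_subset_filter _ (filter_subset _ _)))
  calc #{a ∈ t | g a = b} ≤ #(Ico 1 (m + 1)) := by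
        refine card_le_card_of_injOn f (fun a ha => ?_) fun a ha a' ha' hf => ?_
        · exact (mem_filter.1 (mem_filter.1 ha).1).2
        · simp only [ht, coe_filter, mem_filter, Set.mem_ofPred_eq] at ha ha'
          exact hinj ha.1.1 ha'.1.1 (Prod.ext (ha.2.trans ha'.2.symm) hf)
    _ = m := by simp

namespace IsFiberNumbering

variable {f : α → ℕ}

lemma exists_eq (h : IsFiberNumbering s g f) {a : α} {k : ℕ} (hk : 0 < k)
    (hle : k ≤ #{x ∈ s | g x = g a}) : ∃ b ∈ s, g b = g a ∧ f b = k := by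
  have hmaps : Set.MapsTo f ({x ∈ s | g x = g a} : Finset α) (Icc 1 #{x ∈ s | g x = g a}) := by
    intro x hx
    obtain ⟨hx, hgx⟩ := mem_filter.1 hx
    exact mem_Icc.2 ⟨h.pos x hx, hgx ▸ h.le_card x hx⟩
  have hinj : Set.InjOn f ({x ∈ s | g x = g a} : Finset α) := by
    intro x hx y hy hxy
    obtain ⟨hx, hgx⟩ := mem_filter.1 hx
    obtain ⟨hy, hgy⟩ := mem_filter.1 hy
    exact h.injOn hx hy (Prod.ext (hgx.trans hgy.symm) hxy)
  obtain ⟨b, hb, hbk⟩ :=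
    surjOn_of_injOn_of_card_le f hmaps hinj (by simp) (mem_Icc.2 ⟨hk, hle⟩)
  exact ⟨b, (mem_filter.1 hb).1, (mem_filter.1 hb).2, hbk⟩

lemma card_fiber_eq_part_conj (h : IsFiberNumbering s g f) (i : ℕ) :
    #{a ∈ s | f a = i + 1} = part (conj (fiberCards s g)) i := by
  rw [part_conj_s6, fiberCards, Multiset.filter_map, Multiset.card_map]
  change _ = #{b ∈ s.image g | i + 1 ≤ #{a ∈ s | g a = b}}
  refine card_nbij g (fun a ha => ?_) (fun a ha a' ha' hg => ?_) fun b hb => ?_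
  · obtain ⟨ha, hfa⟩ := mem_filter.1 ha
    exact mem_filter.2 ⟨mem_image_of_mem g ha, hfa ▸ h.le_card a ha⟩
  · obtain ⟨ha, hfa⟩ := mem_filter.1 ha
    obtain ⟨ha', hfa'⟩ := mem_filter.1 ha'
    exact h.injOn ha ha' (Prod.ext hg (hfa.trans hfa'.symm))
  · obtain ⟨hb, hle⟩ := mem_filter.1 hb
    obtain ⟨a, -, rfl⟩ := mem_image.1 hb
    obtain ⟨c, hc, hgc, hfc⟩ := h.exists_eq i.succ_pos hle
    exact ⟨c, mem_filter.2 ⟨hc, hfc⟩, hgc⟩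

lemma fiberCards_eq_conj (h : IsFiberNumbering s g f) :
    fiberCards s f = conj (fiberCards s g) :=
  (eq_fiberCards_of_part (zero_notMem_conj _) h.pos h.card_fiber_eq_part_conj).symm

end IsFiberNumbering

/-- The conjugate of `fiberCards s h` is `fiberCards s f`, and each value of `f` is taken at most
once on every fiber of `g`. -/
lemma fiberCards_domLe_fiberCards {γ : Type*} [DecidableEq γ] {h : α → γ} {f : α → ℕ}
    (hf : IsFiberNumbering s h f) (hinj : Set.InjOn (fun a => (g a, f a)) s) :
    DomLe (fiberCards s g) (fiberCards s h) := by
  refine domLe_of_domLe_conj (by simp only [sum_fiberCards]) fun m => ?_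
  simp only [psum_eq_sum_part (conj (fiberCards s h)), ← hf.card_fiber_eq_part_conj]
  exact sum_card_fiber_le_psum_conj hinj m

section Rank

variable (r : α → α → Prop) [DecidableRel r]

/-- The position of `c` within its fiber of `g` on `s`, listed in the order `r` and counted
from `1`. -/
def fiberRank (s : Finset α) (g : α → β) (c : α) : ℕ := #{d ∈ s | g d = g c ∧ r d c}

variable {r} {c d : α}

lemma card_filter_and_rel_lt [IsPartialOrder α r] {p : α → Prop} [DecidablePred p] (hd : d ∈ s)
    (hpd : p d) (hcd : r c d) (hne : c ≠ d) :
    #{x ∈ s | p x ∧ r x c} < #{x ∈ s | p x ∧ r x d} := by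
  refine card_lt_card ((ssubset_iff_of_subset ?_).2 ⟨d, ?_, ?_⟩)
  · exact monotone_filter_right s fun x _ hx => ⟨hx.1, _root_.trans hx.2 hcd⟩
  · exact mem_filter.2 ⟨hd, hpd, refl d⟩
  · exact fun h => hne (antisymm hcd (mem_filter.1 h).2.2)

lemma fiberRank_lt_fiberRank [IsPartialOrder α r] (hd : d ∈ s) (hg : g c = g d) (hcd : r c d)
    (hne : c ≠ d) : fiberRank r s g c < fiberRank r s g d := by
  rw [fiberRank, hg]
  exact card_filter_and_rel_lt hd rfl hcd hne

lemma fiberRank_le_fiberRank [IsTrans α r] (hg : g c = g d) (hcd : r c d) :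
    fiberRank r s g c ≤ fiberRank r s g d :=
  card_le_card (monotone_filter_right s fun _ _ hx => ⟨hx.1.trans hg, _root_.trans hx.2 hcd⟩)

lemma isFiberNumbering_fiberRank [IsLinearOrder α r] (s : Finset α) (g : α → β) :
    IsFiberNumbering s g (fiberRank r s g) where
  injOn := by
    intro c hc d hd h
    obtain ⟨hg, hrank⟩ := Prod.mk.inj h
    by_contra hne
    rcases total_of r c d with hcd | hdc
    · exact (fiberRank_lt_fiberRank hd hg hcd hne).ne hrank
    · exact (fiberRank_lt_fiberRank hc hg.symm hdc (Ne.symm hne)).ne' hrank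
  pos c hc := card_pos.2 ⟨c, mem_filter.2 ⟨hc, rfl, refl c⟩⟩
  le_card c _ := card_le_card (monotone_filter_right s fun _ _ hx => hx.1)

lemma rel_of_fiberRank_lt [IsLinearOrder α r] (hc : c ∈ s) (hg : g c = g d)
    (hlt : fiberRank r s g c < fiberRank r s g d) : r c d := by
  rcases total_of r c d with hcd | hdc
  · exact hcd
  · rcases eq_or_ne d c with rfl | hne
    · exact refl d
    · exact absurd hlt (fiberRank_lt_fiberRank hc hg.symm hdc hne).not_gt

/-- Send an element of rank `k + 2` to the element of rank `k + 1` in the same fiber. -/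
lemma card_fiberRank_succ_le [IsLinearOrder α r] (s : Finset α) (g : α → β) (d : α) (k : ℕ) :
    #{c ∈ s | fiberRank r s g c = k + 2 ∧ r c d} ≤
      #{c ∈ s | fiberRank r s g c = k + 1 ∧ r c d} := by
  have hnum := isFiberNumbering_fiberRank (r := r) s g
  refine card_le_card_of_forall_subsingleton (fun c c' => g c' = g c) (fun c hc => ?_)
    fun c' _ => ?_
  · obtain ⟨hc, hrank, hcd⟩ := mem_filter.1 hc
    have hle : k + 1 ≤ #{x ∈ s | g x = g c} := by
      have := hnum.le_card c hc
      lia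
    obtain ⟨c', hc', hg, hrank'⟩ := hnum.exists_eq k.succ_pos hle
    have hbefore : r c' c := rel_of_fiberRank_lt hc' hg (by lia)
    exact ⟨c', mem_filter.2 ⟨hc', hrank', _root_.trans hbefore hcd⟩, hg⟩
  · rintro a ⟨ha, hga⟩ b ⟨hb, hgb⟩
    obtain ⟨ha, hra, -⟩ := mem_filter.1 ha
    obtain ⟨hb, hrb, -⟩ := mem_filter.1 hb
    exact hnum.injOn ha hb (Prod.ext (hga.symm.trans hgb) (hra.trans hrb.symm))

end Rank

end Fibers

/-! ### Littlewood–Richardson fillings -/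

instance inst_s6 : IsLinearOrder (ℕ × ℕ) ReadsBefore where
  refl _ := Or.inr ⟨rfl, le_rfl⟩
  trans _ _ _ := by unfold ReadsBefore; lia
  antisymm c d := by unfold ReadsBefore; intro _ _; ext <;> lia
  total _ _ := by unfold ReadsBefore; lia

namespace SkewShape

variable {A : SkewShape}

lemma ordConnected_cells (A : SkewShape) : (A.cells : Set (ℕ × ℕ)).OrdConnected := by
  rw [cells, Finset.coe_sdiff, Set.sdiff_eq]
  exact A.outer.isLowerSet.ordConnected.inter A.inner.isLowerSet.compl.ordConnected

/-- The position of `c` in the reading order among the boxes of `A` in the same fiber of `g`,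
counted from `1`. For `g` the row index this counts from the right end of the row, for `g` the
column index from the top of the column. -/
def readingRank {β : Type*} [DecidableEq β] (A : SkewShape) (g : ℕ × ℕ → β) (c : ℕ × ℕ) : ℕ :=
  fiberRank ReadsBefore A.cells g c

lemma isFiberNumbering_readingRank {β : Type*} [DecidableEq β] (A : SkewShape) (g : ℕ × ℕ → β) :
    IsFiberNumbering A.cells g (A.readingRank g) :=
  isFiberNumbering_fiberRank A.cells g

lemma IsSsyt.isLR_readingRank {β : Type*} [DecidableEq β] {g : ℕ × ℕ → β}
    (h : A.IsSsyt (A.readingRank g)) : A.IsLR (A.readingRank g) :=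
  ⟨h, fun d _ k => card_fiberRank_succ_le A.cells g d k⟩

lemma IsSsyt.injOn_snd {T : ℕ × ℕ → ℕ} (h : A.IsSsyt T) :
    Set.InjOn (fun c => (c.2, T c)) A.cells := by
  rintro ⟨i, j⟩ hc ⟨i', j'⟩ hc' heq
  obtain ⟨rfl, hT⟩ := Prod.mk.inj heq
  rcases lt_trichotomy i i' with hlt | rfl | hgt
  · exact absurd hT (h.2.2 i i' j hc hc' hlt).ne
  · rfl
  · exact absurd hT (h.2.2 i' i j hc' hc hgt).ne'

theorem domLe_conj_cols_of_mem_supp {ν : Multiset ℕ} (h : ν ∈ A.supp) :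
    DomLe ν (conj A.cols) := by
  obtain ⟨-, T, hT, hν⟩ := h
  intro m
  simp only [psum_eq_sum_part ν, ← hν]
  exact sum_card_fiber_le_psum_conj hT.1.injOn_snd m

lemma IsLR.readingRank_lt_of_lt {T : ℕ × ℕ → ℕ} (h : A.IsLR T) {c d : ℕ × ℕ} (hc : c ∈ A.cells)
    (hd : d ∈ A.cells) (hrow : c.1 = d.1) (hlt : T c < T d) :
    A.readingRank T d < A.readingRank T c := by
  have hcol : c.2 < d.2 := by
    by_contra! hle
    have hdc : T (c.1, d.2) ≤ T c := h.1.2.1 c.1 d.2 c.2 (hrow ▸ hd) hc hle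
    exact hlt.not_ge (by rwa [hrow] at hdc)
  have hanti : Antitone fun k => (A.cells.filter fun x => T x = k + 1 ∧ ReadsBefore x d).card :=
    antitone_nat_of_succ_le (h.2 d hd)
  have hTc := h.1.1 c hc
  calc A.readingRank T d
      ≤ (A.cells.filter fun x => T x = T c ∧ ReadsBefore x d).card := by
        simpa only [readingRank, fiberRank, Nat.sub_add_cancel hTc,
          Nat.sub_add_cancel (hTc.trans hlt.le)] using hanti (Nat.sub_le_sub_right hlt.le 1)
    _ < A.readingRank T c :=
        card_filter_and_rel_lt hc rfl (Or.inr ⟨hrow.symm, hcol.le⟩) fun hdc =>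
          hcol.ne (congrArg Prod.snd hdc.symm)

lemma IsLR.injOn_fst_readingRank {T : ℕ × ℕ → ℕ} (h : A.IsLR T) :
    Set.InjOn (fun c => (c.1, A.readingRank T c)) A.cells := by
  intro c hc d hd heq
  obtain ⟨hrow, hrank⟩ := Prod.mk.inj heq
  rcases lt_trichotomy (T c) (T d) with hlt | hT | hgt
  · exact absurd hrank (h.readingRank_lt_of_lt hc hd hrow hlt).ne'
  · exact (A.isFiberNumbering_readingRank T).injOn hc hd (Prod.ext hT hrank)
  · exact absurd hrank (h.readingRank_lt_of_lt hd hc hrow.symm hgt).ne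

theorem rows_domLe_of_mem_supp {ν : Multiset ℕ} (h : ν ∈ A.supp) : DomLe A.rows ν := by
  obtain ⟨h0, T, hT, hν⟩ := h
  rw [eq_fiberCards_of_part h0 hT.1.1 hν]
  exact fiberCards_domLe_fiberCards (A.isFiberNumbering_readingRank T) hT.injOn_fst_readingRank

lemma isSsyt_readingRank_snd (A : SkewShape) : A.IsSsyt (A.readingRank Prod.snd) := by
  refine ⟨(A.isFiberNumbering_readingRank Prod.snd).pos, fun i j j' _ hc' hj => ?_,
    fun i i' j _ hc' hi => ?_⟩
  · refine Finset.card_le_card_of_injOn (fun d => (d.1, j')) ?_ ?_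
    · rintro ⟨a, b⟩ hd
      obtain ⟨hab, rfl, hread⟩ := Finset.mem_filter.1 hd
      have hai : a ≤ i := by unfold ReadsBefore at hread; lia
      have hmem : (a, j') ∈ A.cells :=
        A.ordConnected_cells.out hab hc' ⟨⟨le_rfl, hj⟩, ⟨hai, le_rfl⟩⟩
      refine Finset.mem_filter.2 ⟨hmem, rfl, ?_⟩
      unfold ReadsBefore
      lia
    · rintro ⟨a, b⟩ hd ⟨a', b'⟩ hd' heq
      obtain ⟨-, rfl, -⟩ := Finset.mem_filter.1 hd
      obtain ⟨-, rfl, -⟩ := Finset.mem_filter.1 hd'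
      simpa using heq
  · exact fiberRank_lt_fiberRank hc' rfl (Or.inl hi) (by simp [hi.ne])

theorem conj_cols_mem_supp (A : SkewShape) : conj A.cols ∈ A.supp :=
  ⟨zero_notMem_conj _, A.readingRank Prod.snd, A.isSsyt_readingRank_snd.isLR_readingRank,
    (A.isFiberNumbering_readingRank Prod.snd).card_fiber_eq_part_conj⟩

/-- The filling of content `rows A`: boxes equally far from the right end of their rows are
numbered from top to bottom. -/
def rowFilling (A : SkewShape) : ℕ × ℕ → ℕ := A.readingRank (A.readingRank Prod.fst)

lemma readingRank_fst_le_of_le_snd {c d : ℕ × ℕ} (hrow : c.1 = d.1) (hcol : c.2 ≤ d.2) :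
    A.readingRank Prod.fst d ≤ A.readingRank Prod.fst c :=
  fiberRank_le_fiberRank hrow.symm (Or.inr ⟨hrow.symm, hcol⟩)

lemma readingRank_fst_le_of_le_fst {i i' j : ℕ} (hc : (i, j) ∈ A.cells) (hi : i ≤ i') :
    A.readingRank Prod.fst (i', j) ≤ A.readingRank Prod.fst (i, j) := by
  refine Finset.card_le_card_of_injOn (fun d => (i, d.2)) ?_ ?_
  · rintro ⟨a, b⟩ hd
    obtain ⟨hab, rfl, hread⟩ := Finset.mem_filter.1 hd
    have hjb : j ≤ b := by unfold ReadsBefore at hread; lia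
    have hmem : (i, b) ∈ A.cells := A.ordConnected_cells.out hc hab ⟨⟨le_rfl, hjb⟩, ⟨hi, le_rfl⟩⟩
    exact Finset.mem_filter.2 ⟨hmem, rfl, Or.inr ⟨rfl, hjb⟩⟩
  · rintro ⟨a, b⟩ hd ⟨a', b'⟩ hd' heq
    obtain ⟨-, rfl, -⟩ := Finset.mem_filter.1 hd
    obtain ⟨-, rfl, -⟩ := Finset.mem_filter.1 hd'
    simpa using heq

/-- Every row that reaches the distance of `c` from the right end also reaches the smaller distance
of `d`. -/
lemma rowFilling_le_of_readingRank_fst_le {c d : ℕ × ℕ} (hd : d ∈ A.cells) (hrow : c.1 = d.1)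
    (hle : A.readingRank Prod.fst d ≤ A.readingRank Prod.fst c) :
    A.rowFilling c ≤ A.rowFilling d := by
  have hnum := A.isFiberNumbering_readingRank Prod.fst
  refine Finset.card_le_card_of_forall_subsingleton (fun x y => x.1 = y.1) (fun x hx => ?_)
    fun y _ => ?_
  · obtain ⟨hx, hrank, hread⟩ := Finset.mem_filter.1 hx
    have hxcard := hnum.le_card x hx
    obtain ⟨y, hy, hyx, hyd⟩ := hnum.exists_eq (hnum.pos d hd) (hle.trans (hrank ▸ hxcard))
    refine ⟨y, Finset.mem_filter.2 ⟨hy, hyd, ?_⟩, hyx.symm⟩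
    have hxc : x.1 ≤ c.1 := by unfold ReadsBefore at hread; lia
    rcases hxc.lt_or_eq with hlt | heq
    · exact Or.inl (by rwa [hyx, ← hrow])
    · rw [hnum.injOn hy hd (Prod.ext (hyx.trans (heq.trans hrow)) hyd)]
      exact refl d
  · rintro a ⟨ha, hay⟩ b ⟨hb, hby⟩
    obtain ⟨ha, hrank, -⟩ := Finset.mem_filter.1 ha
    obtain ⟨hb, hrank', -⟩ := Finset.mem_filter.1 hb
    exact hnum.injOn ha hb (Prod.ext (hay.trans hby.symm) (hrank.trans hrank'.symm))

lemma rowFilling_lt_of_lt_fst {i i' j : ℕ} (hc : (i, j) ∈ A.cells) (hc' : (i', j) ∈ A.cells)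
    (hi : i < i') : A.rowFilling (i, j) < A.rowFilling (i', j) := by
  have hnum := A.isFiberNumbering_readingRank Prod.fst
  have hle := readingRank_fst_le_of_le_fst hc hi.le
  obtain ⟨e, he, hei, hrank⟩ :=
    hnum.exists_eq (hnum.pos _ hc') (hle.trans (hnum.le_card _ hc))
  calc A.rowFilling (i, j) ≤ A.rowFilling e :=
        rowFilling_le_of_readingRank_fst_le he hei.symm (hrank.trans_le hle)
    _ < A.rowFilling (i', j) :=
        fiberRank_lt_fiberRank hc' hrank (Or.inl (hei.trans_lt hi)) fun h =>
          hi.ne (hei.symm.trans (congrArg Prod.fst h))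

lemma isSsyt_rowFilling (A : SkewShape) : A.IsSsyt A.rowFilling :=
  ⟨(A.isFiberNumbering_readingRank _).pos,
    fun _ _ _ _ hc' hj =>
      rowFilling_le_of_readingRank_fst_le hc' rfl (readingRank_fst_le_of_le_snd rfl hj),
    fun _ _ _ => rowFilling_lt_of_lt_fst⟩

lemma content_rowFilling (A : SkewShape) (i : ℕ) :
    A.content A.rowFilling (i + 1) = part A.rows i := by
  have hrank := (A.isFiberNumbering_readingRank Prod.fst).fiberCards_eq_conj
  rw [content, rowFilling, (A.isFiberNumbering_readingRank _).card_fiber_eq_part_conj, hrank]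
  exact part_conj_conj A.rows i

theorem rows_mem_supp (A : SkewShape) : A.rows ∈ A.supp :=
  ⟨zero_notMem_fiberCards _ _, A.rowFilling, A.isSsyt_rowFilling.isLR_readingRank,
    A.content_rowFilling⟩

end SkewShape

/-- If `A` and `B` are skew shapes of the same size with
`supp B ⊆ supp A`, then `rows A ⊴ rows B` and `cols A ⊴ cols B` in dominance
order. -/
theorem supp_subset_dominance (A B : SkewShape) (hsize : A.size = B.size)
    (h : B.supp ⊆ A.supp) :
    DomLe A.rows B.rows ∧ DomLe A.cols B.cols := by
  have hsum : A.cols.sum = B.cols.sum :=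
    (sum_fiberCards A.cells Prod.snd).trans (hsize.trans (sum_fiberCards B.cells Prod.snd).symm)
  exact ⟨SkewShape.rows_domLe_of_mem_supp (h B.rows_mem_supp),
    domLe_of_domLe_conj hsum (SkewShape.domLe_conj_cols_of_mem_supp (h B.conj_cols_mem_supp))⟩
end

section
/- If A is a ribbon that is not row equitable, then there exists a row equitable ribbon R of the same size such that s_R − s_A is Schur-positive and supp(A) is strictly contained in supp(R). -/
/-!
Read along a ribbon, its Littlewood–Richardson fillings are the lattice words, hence the standard
Young tableaux, whose ascents and descents follow the steps of the ribbon down and to the left.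
Schützenberger's evacuation preserves the shape of a tableau and reverses its ascent pattern.

If a ribbon has rows of lengths `a` and `b` with `b + 2 ≤ a`, then reversing a suitable piece of its
step pattern, from inside the long row to inside the short one, replaces `a` and `b` by `b + 1` and
`a - 1` and reverses the rows in between. Evacuating an initial part of the tableau moves this piece
to the front, where it interacts with the rest only through the row of its last box and the row
vacated when its first box is deleted. The joint distribution of these two rows favours the new
ribbon, so no coefficient decreases. Iterating ends at a row equitable ribbon, since the sum of the
squares of the row lengths drops.

The new support is larger: an LR filling of a ribbon with `m` rows has a content whose first part is
at least the longest row and whose `m`-th part is at most the shortest one, while a row equitable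
ribbon admits a content with `m` parts any two of which differ by at most one.
-/

/-- The shape obtained from `μ` by adding a box to row `i`; shapes are given by their row
lengths. -/
def addBox (μ : ℕ → ℕ) (i : ℕ) : ℕ → ℕ := fun j => if j = i then μ j + 1 else μ j

/-- `w` is a lattice word relative to `μ`: adding boxes to `μ` in the rows prescribed by the
letters of `w`, one at a time, passes through partitions only. Lattice words relative to `0`
encode standard Young tableaux, and letters count rows from `0`. -/
def LatticeWord : (ℕ → ℕ) → List ℕ → Prop
  | μ, [] => Antitone μ
  | μ, i :: w => Antitone μ ∧ LatticeWord (addBox μ i) w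

theorem addBox_self (μ : ℕ → ℕ) (i : ℕ) : addBox μ i i = μ i + 1 := if_pos rfl

theorem addBox_of_ne (μ : ℕ → ℕ) {i j : ℕ} (h : j ≠ i) : addBox μ i j = μ j := if_neg h

theorem addBox_comm (μ : ℕ → ℕ) (a b : ℕ) : addBox (addBox μ a) b = addBox (addBox μ b) a := by
  funext j
  simp only [addBox]
  grind

theorem addBox_left_injective (a : ℕ) : Function.Injective (addBox · a) := by
  intro μ ν h
  funext j
  have := congrFun h j
  simp only [addBox] at this
  grind

namespace LatticeWord

/-- The shape reached from `μ` by adding the boxes prescribed by the letters of `w`. -/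
def shape (μ : ℕ → ℕ) (w : List ℕ) : ℕ → ℕ := w.foldl addBox μ

section Shape

variable {μ ρ : ℕ → ℕ} {w : List ℕ}

theorem shape_cons (μ : ℕ → ℕ) (i : ℕ) (w : List ℕ) : shape μ (i :: w) = shape (addBox μ i) w := rfl

theorem shape_append (μ : ℕ → ℕ) (v w : List ℕ) : shape μ (v ++ w) = shape (shape μ v) w :=
  List.foldl_append

theorem shape_concat (μ : ℕ → ℕ) (v : List ℕ) (e : ℕ) :
    shape μ (v ++ [e]) = addBox (shape μ v) e :=
  shape_append μ v [e]

theorem shape_apply (μ : ℕ → ℕ) (w : List ℕ) (j : ℕ) : shape μ w j = μ j + w.count j := by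
  induction w generalizing μ with
  | nil => rfl
  | cons i w ih => rw [shape_cons, ih, List.count_cons, addBox]; grind

theorem antitone (hw : LatticeWord μ w) : Antitone μ := by
  cases w with
  | nil => exact hw
  | cons i w => exact hw.1

theorem append_iff {v w : List ℕ} :
    LatticeWord μ (v ++ w) ↔ LatticeWord μ v ∧ LatticeWord (shape μ v) w := by
  induction v generalizing μ with
  | nil => exact ⟨fun h => ⟨h.antitone, h⟩, And.right⟩
  | cons a v ih => exact (and_congr_right' ih).trans and_assoc.symm

theorem antitone_shape (hw : LatticeWord μ w) : Antitone (shape μ w) :=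
  (append_iff.1 (by rwa [List.append_nil] : LatticeWord μ (w ++ []))).2

theorem concat_iff {v : List ℕ} {e : ℕ} :
    LatticeWord μ (v ++ [e]) ↔ LatticeWord μ v ∧ Antitone (addBox (shape μ v) e) :=
  append_iff.trans (and_congr_right fun hv => and_iff_right hv.antitone_shape)

theorem iff_antitone_shape :
    LatticeWord μ w ↔ ∀ u v, w = u ++ v → Antitone (shape μ u) := by
  refine ⟨fun hw u v h => (append_iff.1 (h ▸ hw)).1.antitone_shape, fun hw => ?_⟩
  induction w using List.reverseRecOn with
  | nil => exact hw [] [] rfl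
  | append_singleton v e ih =>
    refine concat_iff.2 ⟨ih fun u v' h => hw u (v' ++ [e]) (by simp [h]), ?_⟩
    rw [← shape_concat]
    exact hw _ [] (by simp)

end Shape

section Ascents

/-- The ascent pattern of a word: entry `k` records whether letter `k + 1` exceeds letter `k`. -/
def ascents (w : List ℕ) : List Bool := List.zipWith (fun a b => decide (a < b)) w w.tail

theorem ascents_cons_cons (a b : ℕ) (w : List ℕ) :
    ascents (a :: b :: w) = decide (a < b) :: ascents (b :: w) := rfl

theorem length_ascents (w : List ℕ) : (ascents w).length = w.length - 1 := by
  simp [ascents]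

theorem length_of_ascents {w : List ℕ} (hw : w ≠ []) :
    w.length = (ascents w).length + 1 := by
  have := List.length_pos_of_ne_nil hw
  rw [length_ascents]
  lia

theorem ascents_tail (w : List ℕ) : ascents w.tail = (ascents w).tail := by
  rcases w with _ | ⟨x, _ | ⟨y, v⟩⟩ <;> rfl

theorem ascents_map_eq_iff {α : Type*} (f g : α → ℕ) (l : List α) :
    ascents (l.map f) = ascents (l.map g) ↔
      l.IsChain fun c d => f c < f d ↔ g c < g d := by
  induction l using List.twoStepInduction with
  | nil => simp [ascents]
  | singleton c => simp [ascents]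
  | cons_cons c d l _ ih =>
    rw [List.isChain_cons_cons, ← ih]
    simp [ascents_cons_cons]

end Ascents

section Slide

variable {ρ : ℕ → ℕ} {h k i i' : ℕ} {w : List ℕ}

/-- The letter produced when a jeu-de-taquin slide whose hole is the last box of row `h` of the
shape `lam` meets a new box in row `i`. The new box moves into the hole exactly when it lies
immediately below it. -/
def slideLetter (lam : ℕ → ℕ) (h i : ℕ) : ℕ :=
  if i = h + 1 ∧ lam h = lam (h + 1) + 1 then h else i

/-- The row of the hole after the step described at `slideLetter`. -/
def slideHole (lam : ℕ → ℕ) (h i : ℕ) : ℕ :=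
  if i = h + 1 ∧ lam h = lam (h + 1) + 1 then h + 1 else h

/-- The word obtained by sliding the boxes of `w` past a hole in row `h` of `lam`. -/
def slide : (ℕ → ℕ) → ℕ → List ℕ → List ℕ
  | _, _, [] => []
  | lam, h, i :: w => slideLetter lam h i :: slide (addBox lam i) (slideHole lam h i) w

/-- The row in which the hole leaves the shape after sliding the boxes of `w` past it. -/
def exitRow : (ℕ → ℕ) → ℕ → List ℕ → ℕ
  | _, h, [] => h
  | lam, h, i :: w => exitRow (addBox lam i) (slideHole lam h i) w

theorem length_slide (lam : ℕ → ℕ) (h : ℕ) (w : List ℕ) : (slide lam h w).length = w.length := by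
  induction w generalizing lam h with
  | nil => rfl
  | cons i _ ih => exact congrArg (· + 1) (ih _ _)

theorem slide_append (lam : ℕ → ℕ) (h : ℕ) (v w : List ℕ) :
    slide lam h (v ++ w) = slide lam h v ++ slide (shape lam v) (exitRow lam h v) w := by
  induction v generalizing lam h with
  | nil => rfl
  | cons i _ ih => exact congrArg _ (ih _ _)

theorem exitRow_append (lam : ℕ → ℕ) (h : ℕ) (v w : List ℕ) :
    exitRow lam h (v ++ w) = exitRow (shape lam v) (exitRow lam h v) w := by
  induction v generalizing lam h with
  | nil => rfl
  | cons i _ ih => exact ih _ _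

theorem monotone_exitRow (lam : ℕ → ℕ) (w : List ℕ) : Monotone (exitRow lam · w) := by
  intro h h' hh
  induction w generalizing lam h h' with
  | nil => exact hh
  | cons i _ ih =>
    apply ih
    simp only [slideHole]
    grind

theorem addBox_slide (ρ : ℕ → ℕ) (h i : ℕ) :
    addBox (addBox ρ (slideLetter (addBox ρ h) h i)) (slideHole (addBox ρ h) h i) =
      addBox (addBox ρ h) i := by
  simp only [slideLetter, slideHole]
  split_ifs with hc
  · rw [hc.1]
  · exact addBox_comm _ _ _

theorem antitone_addBox_slideLetter (hw : LatticeWord ρ [h, i]) :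
    Antitone (addBox ρ (slideLetter (addBox ρ h) h i)) := by
  obtain ⟨h₀, h₁, h₂⟩ := hw
  refine antitone_nat_of_succ_le fun j => ?_
  have hρ := h₀ j.le_succ
  have hρh := h₁ j.le_succ
  have hρhi := h₂ j.le_succ
  simp only [slideLetter, addBox, Nat.succ_eq_add_one] at *
  grind

theorem slide_step (hw : LatticeWord ρ [h, i]) :
    LatticeWord ρ [slideLetter (addBox ρ h) h i, slideHole (addBox ρ h) h i] :=
  ⟨hw.antitone, antitone_addBox_slideLetter hw, addBox_slide ρ h i ▸ hw.2.2⟩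

theorem slide_step_involutive (i : ℕ) (hh : Antitone (addBox ρ h)) :
    slideLetter (addBox ρ (slideLetter (addBox ρ h) h i)) (slideLetter (addBox ρ h) h i)
        (slideHole (addBox ρ h) h i) = h ∧
      slideHole (addBox ρ (slideLetter (addBox ρ h) h i)) (slideLetter (addBox ρ h) h i)
        (slideHole (addBox ρ h) h i) = i := by
  have := hh i.le_succ
  simp only [slideLetter, slideHole, addBox, Nat.succ_eq_add_one] at *
  grind

theorem cons_slide (hw : LatticeWord ρ (h :: i :: w)) :
    LatticeWord (addBox ρ (slideLetter (addBox ρ h) h i)) (slideHole (addBox ρ h) h i :: w) := by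
  have hstep := slide_step (append_iff (v := [h, i]).1 hw).1
  exact ⟨hstep.2.1, addBox_slide ρ h i ▸ hw.2.2⟩

theorem shape_slide_concat (ρ : ℕ → ℕ) (h : ℕ) (w : List ℕ) :
    shape ρ (slide (addBox ρ h) h w ++ [exitRow (addBox ρ h) h w]) = shape ρ (h :: w) := by
  induction w generalizing ρ h with
  | nil => rfl
  | cons i v ih =>
    have := ih (addBox ρ (slideLetter (addBox ρ h) h i)) (slideHole (addBox ρ h) h i)
    rw [addBox_slide] at this
    rw [slide, exitRow, List.cons_append, shape_cons, this]
    simp only [shape_cons, addBox_slide]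

theorem slide_concat (hw : LatticeWord ρ (h :: w)) :
    LatticeWord ρ (slide (addBox ρ h) h w ++ [exitRow (addBox ρ h) h w]) := by
  induction w generalizing ρ h with
  | nil => exact hw
  | cons i v ih =>
    have := ih (cons_slide hw)
    rw [addBox_slide] at this
    exact ⟨hw.antitone, this⟩

theorem slideLetter_lt_slideLetter_iff (hw : LatticeWord ρ [h, i, i']) :
    slideLetter (addBox ρ h) h i <
      slideLetter (addBox (addBox ρ h) i) (slideHole (addBox ρ h) h i) i' ↔ i < i' := by
  obtain ⟨h₀, h₁, h₂, h₃⟩ := hw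
  have hρ := h₀ h.le_succ
  have hρh := h₁ h.le_succ
  have hρhi := h₂ h.le_succ
  have hρhii := h₃ h.le_succ
  have hρhii' := h₃ (h + 1).le_succ
  simp only [slideLetter, slideHole, addBox, Nat.succ_eq_add_one] at *
  grind

theorem ascents_slide (hw : LatticeWord ρ (h :: w)) :
    ascents (slide (addBox ρ h) h w) = ascents w := by
  induction w generalizing ρ h with
  | nil => rfl
  | cons i v ih =>
    cases v with
    | nil => rfl
    | cons i' v =>
      have ih := ih (cons_slide hw)
      have hlt := slideLetter_lt_slideLetter_iff (append_iff (v := [h, i, i']).1 hw).1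
      rw [addBox_slide] at ih
      simp only [slide, ascents_cons_cons] at ih ⊢
      rw [ih, decide_eq_decide.2 hlt]

theorem slideHole_lt_slideHole_iff (hw : LatticeWord ρ [h, k, i]) :
    slideHole (addBox ρ h) h (slideLetter (addBox (addBox ρ h) k) k i) <
      slideHole (addBox (addBox ρ h) k) k i ↔ h < k := by
  obtain ⟨h₀, h₁, h₂, h₃⟩ := hw
  have hρ := h₀ h.le_succ
  have hρh := h₁ h.le_succ
  have hρhk := h₁ k.le_succ
  have hρhk' := h₂ h.le_succ
  have hρhki := h₃ h.le_succ
  have hρhki' := h₃ k.le_succ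
  simp only [slideLetter, slideHole, addBox, Nat.succ_eq_add_one] at *
  grind

/-- The exit rows of successive slides form the evacuated word, so this is why evacuation reverses
ascent patterns. -/
theorem exitRow_lt_exitRow_iff (hw : LatticeWord ρ (h :: k :: w)) :
    exitRow (addBox ρ h) h (slide (addBox (addBox ρ h) k) k w) <
      exitRow (addBox (addBox ρ h) k) k w ↔ h < k := by
  induction w generalizing ρ h k with
  | nil => rfl
  | cons i v ih =>
    have hlt := slideHole_lt_slideHole_iff (append_iff (v := [h, k, i]).1 hw).1
    have hki := cons_slide hw.2
    have := ih (cons_slide ⟨hw.antitone, hw.2.antitone, hki⟩)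
    rw [addBox_slide] at this
    rw [addBox_slide] at this
    simp only [slide, exitRow]
    rw [this, hlt]

end Slide

section Evacuation

variable {w u v : List ℕ} {e f : ℕ}

/-- The row of the last box of the tableau encoded by `w`; junk value `0` on the empty word. -/
def lastRow (w : List ℕ) : ℕ := w.getLastD 0

/-- The row in which the slide into the first box of the tableau encoded by `w` leaves the shape;
junk value `0` on the empty word. -/
def vacatedRow : List ℕ → ℕ
  | [] => 0
  | x :: v => exitRow (addBox 0 x) x v

/-- Delete the first box of the tableau encoded by `w` and slide the other boxes into it. -/
def deleteFirst : List ℕ → List ℕ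
  | [] => []
  | x :: v => slide (addBox 0 x) x v

theorem length_deleteFirst (w : List ℕ) : (deleteFirst w).length = w.length - 1 := by
  cases w
  · rfl
  · exact length_slide _ _ _

/-- Schützenberger's evacuation: the rows vacated when the boxes are deleted one after the other
form the evacuated word, read backwards. -/
def evac (w : List ℕ) : List ℕ :=
  if _ : w = [] then [] else evac (deleteFirst w) ++ [vacatedRow w]
termination_by w.length
decreasing_by
  have := List.length_pos_iff.2 ‹w ≠ []›
  rw [length_deleteFirst]
  lia

theorem evac_nil : evac [] = [] := by
  rw [evac, dif_pos rfl]

theorem evac_of_ne_nil (h : w ≠ []) : evac w = evac (deleteFirst w) ++ [vacatedRow w] := by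
  rw [evac, dif_neg h]

theorem length_evac (w : List ℕ) : (evac w).length = w.length := by
  induction w using evac.induct with
  | case1 => rw [evac_nil]
  | case2 w h ih =>
    have := List.length_pos_iff.2 h
    rw [evac_of_ne_nil h, List.length_append, ih, length_deleteFirst, List.length_singleton]
    lia

theorem evac_ne_nil (h : w ≠ []) : evac w ≠ [] := by
  simp [evac_of_ne_nil h]

theorem lastRow_concat (v : List ℕ) (e : ℕ) : lastRow (v ++ [e]) = e :=
  List.getLastD_concat

theorem lastRow_evac (h : w ≠ []) : lastRow (evac w) = vacatedRow w := by
  rw [evac_of_ne_nil h, lastRow_concat]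

theorem shape_deleteFirst_concat (h : w ≠ []) :
    addBox (shape 0 (deleteFirst w)) (vacatedRow w) = shape 0 w := by
  cases w with
  | nil => contradiction
  | cons x v => rw [← shape_concat]; exact shape_slide_concat 0 x v

theorem deleteFirst_concat (hw : LatticeWord 0 w) (h : w ≠ []) :
    LatticeWord 0 (deleteFirst w ++ [vacatedRow w]) := by
  cases w with
  | nil => contradiction
  | cons x v => exact slide_concat hw

theorem deleteFirst_latticeWord (hw : LatticeWord 0 w) : LatticeWord 0 (deleteFirst w) := by
  cases w with
  | nil => exact hw
  | cons x v => exact (append_iff.1 (slide_concat hw)).1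

theorem deleteFirst_pair (h : w ≠ []) (hw : LatticeWord 0 (w ++ [e])) :
    LatticeWord (shape 0 (deleteFirst w)) [vacatedRow w, e] := by
  have : LatticeWord 0 (deleteFirst w ++ [vacatedRow w, e]) := by
    rw [List.append_cons, concat_iff, shape_concat, shape_deleteFirst_concat h]
    exact ⟨deleteFirst_concat (concat_iff.1 hw).1 h, (concat_iff.1 hw).2⟩
  exact (append_iff.1 this).2

theorem deleteFirst_append (h : w ≠ []) (v : List ℕ) :
    deleteFirst (w ++ v) = deleteFirst w ++ slide (shape 0 w) (vacatedRow w) v := by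
  cases w with
  | nil => contradiction
  | cons x w => exact slide_append _ _ _ _

theorem vacatedRow_append (h : w ≠ []) (v : List ℕ) :
    vacatedRow (w ++ v) = exitRow (shape 0 w) (vacatedRow w) v := by
  cases w with
  | nil => contradiction
  | cons x w => exact exitRow_append _ _ _ _

theorem ascents_deleteFirst (hw : LatticeWord 0 w) :
    ascents (deleteFirst w) = (ascents w).tail := by
  cases w with
  | nil => rfl
  | cons x v => rw [← ascents_tail]; exact ascents_slide hw

theorem eq_zero_of_antitone_addBox_zero {i : ℕ} (h : Antitone (addBox 0 i)) : i = 0 := by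
  by_contra hi
  have := h (Nat.zero_le i)
  rw [addBox_self, addBox_of_ne _ (Ne.symm hi)] at this
  simp at this

theorem vacatedRow_deleteFirst_lt_iff {x y : ℕ} (hw : LatticeWord 0 (x :: y :: v)) :
    vacatedRow (deleteFirst (x :: y :: v)) < vacatedRow (x :: y :: v) ↔ x < y := by
  have hslide := exitRow_lt_exitRow_iff ⟨hw.antitone, cons_slide hw⟩
  rw [addBox_slide] at hslide
  obtain rfl := eq_zero_of_antitone_addBox_zero hw.2.antitone
  have hxy := hw.2.2.antitone (Nat.sub_le y 1)
  simp only [deleteFirst, vacatedRow, slide, exitRow]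
  rw [hslide]
  simp only [slideLetter, slideHole, addBox, Pi.zero_apply] at hxy ⊢
  grind

theorem shape_evac (w : List ℕ) : shape 0 (evac w) = shape 0 w := by
  induction w using evac.induct with
  | case1 => rw [evac_nil]
  | case2 w h ih => rw [evac_of_ne_nil h, shape_concat, ih, shape_deleteFirst_concat h]

theorem evac_latticeWord (hw : LatticeWord 0 w) : LatticeWord 0 (evac w) := by
  induction w using evac.induct with
  | case1 => rwa [evac_nil]
  | case2 w h ih =>
    rw [evac_of_ne_nil h, concat_iff, shape_evac, shape_deleteFirst_concat h]
    exact ⟨ih (deleteFirst_latticeWord hw), hw.antitone_shape⟩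

theorem evac_concat (hw : LatticeWord 0 (w ++ [e])) :
    vacatedRow (evac (w ++ [e])) = e ∧ deleteFirst (evac (w ++ [e])) = evac w := by
  induction w using evac.induct generalizing e with
  | case1 =>
    obtain rfl := eq_zero_of_antitone_addBox_zero hw.2
    simp [evac_of_ne_nil, evac_nil, deleteFirst, vacatedRow, slide, exitRow]
  | case2 w h ih =>
    set u := deleteFirst w
    set b := vacatedRow w
    have hbe := deleteFirst_pair h hw
    have hu : shape 0 w = addBox (shape 0 u) b := (shape_deleteFirst_concat h).symm
    have hstep := slide_step_involutive e hbe.2.antitone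
    set e' := slideLetter (addBox (shape 0 u) b) b e
    set b' := slideHole (addBox (shape 0 u) b) b e
    have hue' : LatticeWord 0 (u ++ [e']) :=
      concat_iff.2 ⟨deleteFirst_latticeWord (concat_iff.1 hw).1,
        antitone_addBox_slideLetter hbe⟩
    have hdel : deleteFirst (w ++ [e]) = u ++ [e'] := by
      rw [deleteFirst_append h, hu]; rfl
    have hvac : vacatedRow (w ++ [e]) = b' := by
      rw [vacatedRow_append h, hu]; rfl
    have hne : evac (u ++ [e']) ≠ [] := evac_ne_nil (by simp)
    obtain ⟨ihv, ihd⟩ := ih hue'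
    rw [evac_of_ne_nil (by simp), hdel, hvac, vacatedRow_append hne, deleteFirst_append hne,
      ihv, ihd, shape_evac, shape_concat, evac_of_ne_nil h]
    exact ⟨hstep.2, congrArg (evac u ++ [·]) hstep.1⟩

theorem evac_evac (hw : LatticeWord 0 w) : evac (evac w) = w := by
  induction w using List.reverseRecOn with
  | nil => rw [evac_nil, evac_nil]
  | append_singleton v e ih =>
    obtain ⟨hvac, hdel⟩ := evac_concat hw
    rw [evac_of_ne_nil (evac_ne_nil (by simp)), hvac, hdel, ih (concat_iff.1 hw).1]

theorem vacatedRow_evac (hw : LatticeWord 0 w) : vacatedRow (evac w) = lastRow w := by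
  induction w using List.reverseRecOn with
  | nil => rw [evac_nil]; rfl
  | append_singleton v e => rw [(evac_concat hw).1, lastRow_concat]

theorem ascents_append (hv : v ≠ []) (w : List ℕ) :
    ascents (v ++ w) = ascents v ++ ascents (lastRow v :: w) := by
  induction v with
  | nil => contradiction
  | cons a v ih =>
    cases v with
    | nil => rfl
    | cons b v => exact congrArg _ (ih (List.cons_ne_nil b v))

theorem ascents_concat (hv : v ≠ []) (x : ℕ) :
    ascents (v ++ [x]) = ascents v ++ [decide (lastRow v < x)] :=
  ascents_append hv [x]

theorem ascents_evac (hw : LatticeWord 0 w) : ascents (evac w) = (ascents w).reverse := by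
  induction w using evac.induct with
  | case1 => rw [evac_nil]; rfl
  | case2 w h ih =>
    obtain ⟨x, v, rfl⟩ := List.exists_cons_of_ne_nil h
    cases v with
    | nil => rw [evac_of_ne_nil h]; simp [deleteFirst, slide, evac_nil, ascents]
    | cons y v =>
      have hne : deleteFirst (x :: y :: v) ≠ [] := List.cons_ne_nil _ _
      rw [evac_of_ne_nil h, ascents_concat (evac_ne_nil hne), lastRow_evac hne,
        ih (deleteFirst_latticeWord hw), ascents_deleteFirst hw, ascents_cons_cons,
        List.tail_cons, List.reverse_cons, decide_eq_decide.2 (vacatedRow_deleteFirst_lt_iff hw)]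

end Evacuation

end LatticeWord

theorem ncard_le_ncard_of_fiberwise {α β γ : Type*} {S : Set α} {T : Set β} (hS : S.Finite)
    (hT : T.Finite) (f : α → γ) (g : β → γ)
    (hfg : ∀ z, {a ∈ S | f a = z}.ncard ≤ {b ∈ T | g b = z}.ncard) : S.ncard ≤ T.ncard := by
  classical
  lift S to Finset α using hS
  lift T to Finset β using hT
  simp only [Finset.mem_coe, ← Finset.coe_filter, Set.ncard_coe_finset] at hfg ⊢
  let Z := S.image f ∪ T.image g
  rw [Finset.card_eq_sum_card_fiberwise (f := f) (t := Z)
      fun a ha => Finset.mem_union_left _ (Finset.mem_image_of_mem f ha),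
    Finset.card_eq_sum_card_fiberwise (f := g) (t := Z)
      fun b hb => Finset.mem_union_right _ (Finset.mem_image_of_mem g hb)]
  exact Finset.sum_le_sum fun z _ => hfg z

theorem ncard_sep_le_ncard_sep_swap {α : Type*} {S : Set α} (hS : S.Finite) (s t : α → ℕ)
    (hst : ∀ x y, x < y →
      {a ∈ S | s a = x ∧ t a = y}.ncard ≤ {a ∈ S | s a = y ∧ t a = x}.ncard)
    {C : ℕ → ℕ → Prop} (hC : ∀ x y, y ≤ x → C x y → C y x) :
    {a ∈ S | C (s a) (t a)}.ncard ≤ {a ∈ S | C (t a) (s a)}.ncard := by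
  have hL : {a ∈ S | C (s a) (t a)}.Finite := hS.sep _
  have hR : {a ∈ S | C (t a) (s a)}.Finite := hS.sep _
  rw [Set.ncard_le_ncard_iff_ncard_sdiff_le_ncard_sdiff hL hR]
  refine ncard_le_ncard_of_fiberwise hL.sdiff hR.sdiff
    (fun a => (s a, t a)) (fun a => (t a, s a)) ?_
  rintro ⟨x, y⟩
  -- Only values with `C x y` and not `C y x` contribute, and these satisfy `x < y`.
  by_cases hxy : C x y ∧ ¬ C y x
  · have hlt : x < y := not_le.1 fun h => hxy.2 (hC x y h hxy.1)
    convert hst x y hlt using 2 <;> ext a <;>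
      simp only [Set.mem_ofPred_eq, Set.mem_sdiff, Prod.mk.injEq] <;> grind
  · convert Nat.zero_le _
    rw [Set.ncard_eq_zero (hL.sdiff.sep _)]
    ext a
    simp only [Set.mem_ofPred_eq, Set.mem_sdiff, Prod.mk.injEq, Set.mem_empty_iff_false]
    grind

namespace LatticeWord

section Frame

variable {w u v : List ℕ} {e f : ℕ} {μ : ℕ → ℕ}

/-- The tableau word obtained from `u` by adding a new first box, whose deletion vacates row `f`,
and a new last box in row `e`. -/
def frame (u : List ℕ) (e f : ℕ) : List ℕ := evac (evac u ++ [f]) ++ [e]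

theorem lastRow_frame (u : List ℕ) (e f : ℕ) : lastRow (frame u e f) = e := lastRow_concat _ _

theorem shape_frame (u : List ℕ) (e f : ℕ) :
    shape 0 (frame u e f) = addBox (addBox (shape 0 u) f) e := by
  rw [frame, shape_concat, shape_evac, shape_concat, shape_evac]

theorem antitone_addBox_addBox (he : Antitone (addBox μ e)) (hf : Antitone (addBox μ f))
    (hne : e ≠ f) : Antitone (addBox (addBox μ f) e) := by
  refine antitone_nat_of_succ_le fun j => ?_
  have hej := he j.le_succ
  have hfj := hf j.le_succ
  simp only [addBox, Nat.succ_eq_add_one] at *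
  grind

theorem evac_concat_latticeWord (hu : LatticeWord 0 u) (hf : Antitone (addBox (shape 0 u) f)) :
    LatticeWord 0 (evac u ++ [f]) :=
  concat_iff.2 ⟨evac_latticeWord hu, by rwa [shape_evac]⟩

theorem frame_latticeWord (hu : LatticeWord 0 u) (he : Antitone (addBox (shape 0 u) e))
    (hf : Antitone (addBox (shape 0 u) f)) (hne : e ≠ f) : LatticeWord 0 (frame u e f) := by
  refine concat_iff.2 ⟨evac_latticeWord (evac_concat_latticeWord hu hf), ?_⟩
  rw [shape_evac, shape_concat, shape_evac]
  exact antitone_addBox_addBox he hf hne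

theorem deleteFirst_dropLast_frame (hu : LatticeWord 0 u) (hf : Antitone (addBox (shape 0 u) f)) :
    deleteFirst (frame u e f).dropLast = u := by
  rw [frame, List.dropLast_concat, (evac_concat (evac_concat_latticeWord hu hf)).2, evac_evac hu]

theorem not_blocked_of_antitone (he : Antitone (addBox μ e)) :
    ¬ (e = f + 1 ∧ addBox μ f f = addBox μ f (f + 1) + 1) := by
  have := he f.le_succ
  simp only [addBox, Nat.succ_eq_add_one] at *
  grind

theorem vacatedRow_frame (hu : LatticeWord 0 u) (he : Antitone (addBox (shape 0 u) e))
    (hf : Antitone (addBox (shape 0 u) f)) : vacatedRow (frame u e f) = f := by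
  rw [frame, vacatedRow_append (evac_ne_nil (by simp)), shape_evac, shape_concat, shape_evac,
    (evac_concat (evac_concat_latticeWord hu hf)).1]
  exact if_neg (not_blocked_of_antitone he)

theorem deleteFirst_frame (hu : LatticeWord 0 u) (he : Antitone (addBox (shape 0 u) e))
    (hf : Antitone (addBox (shape 0 u) f)) : deleteFirst (frame u e f) = u ++ [e] := by
  obtain ⟨hvac, hdel⟩ := evac_concat (evac_concat_latticeWord hu hf)
  rw [frame, deleteFirst_append (evac_ne_nil (by simp)), shape_evac, shape_concat, shape_evac,
    hvac, hdel, evac_evac hu]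
  exact congrArg (u ++ [·]) (if_neg (not_blocked_of_antitone he))

theorem ascents_frame (hu : LatticeWord 0 u) (hne : u ≠ []) (he : Antitone (addBox (shape 0 u) e))
    (hf : Antitone (addBox (shape 0 u) f)) (hef : e ≠ f) :
    ascents (frame u e f) =
      decide (vacatedRow u < f) :: ascents u ++ [decide (lastRow u < e)] := by
  have htail := ascents_deleteFirst (frame_latticeWord hu he hf hef)
  rw [deleteFirst_frame hu he hf, ascents_concat hne] at htail
  have hinner : ascents (evac (evac u ++ [f])) = decide (vacatedRow u < f) :: ascents u := by
    rw [ascents_evac (evac_concat_latticeWord hu hf), ascents_concat (evac_ne_nil hne),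
      ascents_evac hu, lastRow_evac hne, List.reverse_concat, List.reverse_reverse]
  rw [frame, ascents_concat (evac_ne_nil (by simp)), hinner, List.cons_append] at htail ⊢
  rw [List.cons_append, htail, List.tail_cons]

theorem exists_eq_frame (hw : LatticeWord 0 w) (hne : lastRow w ≠ vacatedRow w) :
    ∃ u, LatticeWord 0 u ∧ Antitone (addBox (shape 0 u) (lastRow w)) ∧
      Antitone (addBox (shape 0 u) (vacatedRow w)) ∧ w = frame u (lastRow w) (vacatedRow w) := by
  induction w using List.reverseRecOn with
  | nil => exact absurd rfl hne
  | append_singleton v e =>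
    rw [lastRow_concat] at hne ⊢
    have hv : v ≠ [] := by
      rintro rfl
      obtain rfl := eq_zero_of_antitone_addBox_zero hw.2.antitone
      exact hne rfl
    have hpair := deleteFirst_pair hv hw
    have hlast := antitone_addBox_slideLetter hpair
    have hvac := vacatedRow_append hv [e]
    rw [← shape_deleteFirst_concat hv] at hvac
    simp only [exitRow, slideHole] at hvac
    split_ifs at hvac with hblocked
    · exact absurd (hblocked.1.trans hvac.symm) hne
    · rw [slideLetter, if_neg hblocked] at hlast
      rw [hvac]
      refine ⟨deleteFirst v, deleteFirst_latticeWord (concat_iff.1 hw).1, hlast, hpair.2.antitone,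
        ?_⟩
      rw [frame, ← evac_of_ne_nil hv, evac_evac (concat_iff.1 hw).1]

end Frame

section Counting

variable {ν : ℕ → ℕ} {p K : List Bool} {w : List ℕ} {a b : ℕ} {c d : Bool}

/-- The words of the standard Young tableaux of shape `ν` whose ascent pattern is `p`. -/
def words (p : List Bool) (ν : ℕ → ℕ) : Set (List ℕ) :=
  {w | w ≠ [] ∧ LatticeWord 0 w ∧ ascents w = p ∧ shape 0 w = ν}

theorem finite_words (p : List Bool) (ν : ℕ → ℕ) : (words p ν).Finite := by
  rcases (words p ν).eq_empty_or_nonempty with h | ⟨w₀, hw₀⟩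
  · rw [h]; exact Set.finite_empty
  · refine (List.finite_toSet w₀.permutations).subset fun w hw => ?_
    refine List.mem_permutations.2 (List.perm_iff_count.2 fun j => ?_)
    simpa [shape_apply] using congrFun (hw.2.2.2.trans hw₀.2.2.2.symm) j

theorem length_of_mem_words (hw : w ∈ words p ν) : w.length = p.length + 1 := by
  rw [length_of_ascents hw.1, hw.2.2.1]

/-- Every shape is realised by at most as many tableau words with ascent pattern `p` as with
ascent pattern `q`. -/
def PatternLE (p q : List Bool) : Prop := ∀ ν, (words p ν).ncard ≤ (words q ν).ncard

theorem PatternLE.refl (p : List Bool) : PatternLE p p := fun _ => le_rfl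

theorem PatternLE.trans {p q r : List Bool} (hpq : PatternLE p q) (hqr : PatternLE q r) :
    PatternLE p r := fun ν => (hpq ν).trans (hqr ν)

theorem PatternLE.nonempty {p q : List Bool} (hpq : PatternLE p q) (h : (words p ν).Nonempty) :
    (words q ν).Nonempty :=
  Set.nonempty_of_ncard_ne_zero
    (((Set.ncard_pos (finite_words p ν)).2 h).trans_le (hpq ν)).ne'

theorem ncard_words_reverse_le (P : ℕ → ℕ → Prop) :
    {w ∈ words K.reverse ν | P (lastRow w) (vacatedRow w)}.ncard ≤
      {w ∈ words K ν | P (vacatedRow w) (lastRow w)}.ncard := by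
  refine Set.ncard_le_ncard_of_injOn evac ?_ ?_ ((finite_words K ν).sep _)
  · rintro w ⟨⟨hne, hw, hasc, hshape⟩, hP⟩
    refine ⟨⟨evac_ne_nil hne, evac_latticeWord hw, ?_, (shape_evac w).trans hshape⟩, ?_⟩
    · rw [ascents_evac hw, hasc, List.reverse_reverse]
    · rwa [vacatedRow_evac hw, lastRow_evac hne]
  · rintro w ⟨hw, -⟩ w' ⟨hw', -⟩ heq
    rw [← evac_evac hw.2.1, heq, evac_evac hw'.2.1]

theorem patternLE_reverse (p : List Bool) : PatternLE p p.reverse := by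
  intro ν
  simpa using ncard_words_reverse_le (K := p.reverse) (ν := ν) fun _ _ => True

/-- Among the tableau words with ascent pattern `K`, those in which a given row ends the tableau
and a given lower row is vacated are at most as many as those with the two rows interchanged. -/
def SwapLE (K : List Bool) : Prop :=
  ∀ ν a b, a < b → {w ∈ words K ν | lastRow w = a ∧ vacatedRow w = b}.ncard ≤
    {w ∈ words K ν | lastRow w = b ∧ vacatedRow w = a}.ncard

theorem ncard_words_frame (hab : a ≠ b) (ha : Antitone (addBox ν a)) (hb : Antitone (addBox ν b)) :
    {w ∈ words (c :: K ++ [d]) (addBox (addBox ν b) a) | lastRow w = a ∧ vacatedRow w = b}.ncard =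
      {u ∈ words K ν | decide (vacatedRow u < b) = c ∧ decide (lastRow u < a) = d}.ncard := by
  symm
  refine Set.ncard_congr (fun u _ => frame u a b) ?_ ?_ ?_
  · rintro u ⟨⟨hne, hu, rfl, rfl⟩, rfl, rfl⟩
    exact ⟨⟨by simp [frame], frame_latticeWord hu ha hb hab, ascents_frame hu hne ha hb hab,
      shape_frame u a b⟩, lastRow_frame u a b, vacatedRow_frame hu ha hb⟩
  · rintro u u' ⟨⟨-, hu, -, hshape⟩, -⟩ ⟨⟨-, hu', -, hshape'⟩, -⟩ heq
    rw [← deleteFirst_dropLast_frame hu (hshape ▸ hb), heq,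
      deleteFirst_dropLast_frame hu' (hshape' ▸ hb)]
  · rintro w ⟨hw, rfl, rfl⟩
    obtain ⟨u, hu, hua, hub, hwu⟩ := exists_eq_frame hw.2.1 hab
    have hν : shape 0 u = ν := by
      apply addBox_left_injective (vacatedRow w)
      apply addBox_left_injective (lastRow w)
      exact (shape_frame _ _ _).symm.trans ((congrArg _ hwu.symm).trans hw.2.2.2)
    have hne : u ≠ [] := by
      rintro rfl
      have hlen := length_of_mem_words hw
      rw [hwu, frame, List.length_append, length_evac, List.length_append, length_evac] at hlen
      simp at hlen
    have hasc := hw.2.2.1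
    rw [hwu, ascents_frame hu hne hua hub hab, List.cons_append, List.cons_append,
      List.cons.injEq] at hasc
    obtain ⟨hc, hK, hd⟩ := hasc.imp_right List.append_singleton_inj.1
    exact ⟨u, ⟨⟨hne, hu, hK, hν⟩, hc, hd⟩, hwu.symm⟩

theorem swapLE_frame
    (h : ∀ ν a b, a < b →
      {u ∈ words K ν | decide (vacatedRow u < b) = c ∧ decide (lastRow u < a) = d}.ncard ≤
        {u ∈ words K ν | decide (vacatedRow u < a) = c ∧ decide (lastRow u < b) = d}.ncard) :
    SwapLE (c :: K ++ [d]) := by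
  intro ν a b hab
  rcases Set.eq_empty_or_nonempty
    {w ∈ words (c :: K ++ [d]) ν | lastRow w = a ∧ vacatedRow w = b} with hempty | ⟨w, hw, rfl, rfl⟩
  · rw [hempty, Set.ncard_empty]
    exact Nat.zero_le _
  · obtain ⟨u, -, hua, hub, hwu⟩ := exists_eq_frame hw.2.1 hab.ne
    have hν : ν = addBox (addBox (shape 0 u) (vacatedRow w)) (lastRow w) := by
      rw [← shape_frame, ← hwu, hw.2.2.2]
    rw [hν, ncard_words_frame hab.ne hua hub, addBox_comm, ncard_words_frame hab.ne' hub hua]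
    exact h _ _ _ hab

theorem swapLE_false_true (K : List Bool) : SwapLE (false :: K ++ [true]) := by
  refine swapLE_frame fun ν a b hab =>
    Set.ncard_le_ncard (fun u hu => ?_) ((finite_words K ν).sep _)
  simp only [Set.mem_ofPred_eq, decide_eq_false_iff_not, decide_eq_true_iff] at hu ⊢
  grind

theorem SwapLE.false_false (hK : SwapLE K) : SwapLE (false :: K ++ [false]) := by
  refine swapLE_frame fun ν a b hab => ?_
  have := ncard_sep_le_ncard_sep_swap (finite_words K ν) lastRow vacatedRow (hK ν)
    (C := fun x y => a ≤ x ∧ b ≤ y) (fun x y hyx hC => ⟨hab.le.trans hC.2, hC.2.trans hyx⟩)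
  simpa only [decide_eq_false_iff_not, not_lt, and_comm] using this

theorem SwapLE.replicate_false (hK : SwapLE K) (n : ℕ) :
    SwapLE (List.replicate n false ++ K ++ List.replicate n false) := by
  induction n with
  | zero => simpa using hK
  | succ n ih =>
    have := ih.false_false
    rwa [List.replicate_succ, List.cons_append, List.cons_append, ← List.replicate_succ,
      List.replicate_succ', ← List.append_assoc]

theorem SwapLE.ncard_reverse_le (hK : SwapLE K) (ν : ℕ → ℕ) {U D : ℕ → Prop}
    (hU : Monotone U) (hD : Antitone D) :
    {w ∈ words K.reverse ν | U (lastRow w) ∧ D (vacatedRow w)}.ncard ≤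
      {w ∈ words K ν | U (lastRow w) ∧ D (vacatedRow w)}.ncard := by
  refine (ncard_words_reverse_le fun x y => U x ∧ D y).trans ?_
  have := ncard_sep_le_ncard_sep_swap (finite_words K ν) lastRow vacatedRow (hK ν)
    (C := fun x y => U y ∧ D x) (fun x y hyx hC => ⟨hU hyx hC.1, hD hyx hC.2⟩)
  exact this

end Counting

section Context

variable {ν : ℕ → ℕ} {A B K : List Bool} {q V W z : List ℕ} {k m : ℕ}

/-- Lengthen the tableau word `q` at its end by `V`, evacuate, and lengthen the result by `W`. -/
def glue (q V W : List ℕ) : List ℕ := evac (q ++ V) ++ W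

/-- The inverse of `glue` for `q.length = k` and `(q ++ V).length = m`. -/
def unglue (k m : ℕ) (z : List ℕ) : List ℕ × List ℕ × List ℕ :=
  ((evac (z.take m)).take k, (evac (z.take m)).drop k, z.drop m)

theorem glue_unglue (hz : LatticeWord 0 z) (k m : ℕ) :
    glue (unglue k m z).1 (unglue k m z).2.1 (unglue k m z).2.2 = z := by
  have htake : LatticeWord 0 (z.take m) := by
    rw [← List.take_append_drop m z] at hz
    exact (append_iff.1 hz).1
  rw [glue, unglue, List.take_append_drop, evac_evac htake, List.take_append_drop]

theorem unglue_glue (h : LatticeWord 0 (q ++ V)) (W : List ℕ) (hq : q.length = k)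
    (hqV : (q ++ V).length = m) : unglue k m (glue q V W) = (q, V, W) := by
  have hlen : (evac (q ++ V)).length = m := by rw [length_evac, hqV]
  rw [unglue, glue, List.take_left' hlen, List.drop_left' hlen, evac_evac h, List.take_left' hq,
    List.drop_left' hq]

theorem ascents_glue_eq_iff (h : LatticeWord 0 (q ++ V)) (hq : q.length = K.length + 1)
    (hV : V.length = A.length + 1) :
    ascents (glue q V W) = A ++ false :: K ++ B ↔
      ascents q = K.reverse ∧ ascents (lastRow q :: V) = false :: A.reverse ∧
        ascents (exitRow (shape 0 q) (vacatedRow q) V :: W) = B := by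
  have hq₀ : q ≠ [] := List.ne_nil_of_length_eq_add_one hq
  have hqV₀ : q ++ V ≠ [] := List.append_ne_nil_of_left_ne_nil hq₀ V
  have hrev : A ++ false :: K = (K.reverse ++ false :: A.reverse).reverse := by simp
  rw [glue, ascents_append (evac_ne_nil hqV₀), ascents_evac h, lastRow_evac hqV₀,
    vacatedRow_append hq₀, ascents_append hq₀, hrev, List.append_eq_append_iff_of_size_eq_left,
    List.reverse_inj, List.append_eq_append_iff_of_size_eq_left, and_assoc]
  · simp [length_ascents, hq]
  · simp only [List.length_reverse, length_ascents, List.length_cons, List.length_append, hq, hV]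
    lia

theorem glue_mem_words_iff (h : LatticeWord 0 (q ++ V)) (hq : q.length = K.length + 1)
    (hV : V.length = A.length + 1) :
    glue q V W ∈ words (A ++ false :: K ++ B) ν ↔
      q ∈ {u ∈ words K.reverse (shape 0 q) | ascents (lastRow u :: V) = false :: A.reverse ∧
        ascents (exitRow (shape 0 q) (vacatedRow u) V :: W) = B} ∧
      LatticeWord (shape 0 q) (V ++ W) ∧ shape (shape 0 q) (V ++ W) = ν := by
  have hq₀ : q ≠ [] := List.ne_nil_of_length_eq_add_one hq
  have hne : glue q V W ≠ [] :=
    List.append_ne_nil_of_left_ne_nil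
      (evac_ne_nil (List.append_ne_nil_of_left_ne_nil hq₀ V)) W
  have hlattice : LatticeWord 0 (glue q V W) ↔ LatticeWord (shape 0 q) (V ++ W) := by
    rw [glue, append_iff, append_iff, shape_evac, shape_append]
    exact and_congr_left' (iff_of_true (evac_latticeWord h) (append_iff.1 h).2)
  have hshape : shape 0 (glue q V W) = shape (shape 0 q) (V ++ W) := by
    rw [glue, shape_append, shape_evac, shape_append, shape_append]
  simp only [words, Set.mem_ofPred_eq, ascents_glue_eq_iff h hq hV, hlattice, hshape]
  have := (append_iff.1 h).1
  tauto

theorem monotone_ascents_cons_eq (V : List ℕ) (p : List Bool) :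
    Monotone fun x => ascents (x :: V) = false :: p := by
  intro x y hxy h
  cases V with
  | nil => exact h
  | cons a V =>
    simp only [ascents_cons_cons, List.cons.injEq, decide_eq_false_iff_not] at h ⊢
    exact ⟨fun hya => h.1 (hxy.trans_lt hya), h.2⟩

theorem antitone_ascents_cons_eq (W : List ℕ) (hB : B.head? ≠ some false) :
    Antitone fun x => ascents (x :: W) = B := by
  rintro x y hxy rfl
  cases W with
  | nil => rfl
  | cons a W =>
    have hya : y < a := by simpa [ascents_cons_cons] using hB
    simp only [ascents_cons_cons, hya, hxy.trans_lt hya]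

theorem unglue_of_mem_words (hz : z ∈ words (A ++ false :: K ++ B) ν) (hk : k = K.length + 1)
    (hm : m = k + A.length + 1) (h : unglue k m z = (q, V, W)) :
    z = glue q V W ∧ LatticeWord 0 (q ++ V) ∧ q.length = k ∧ V.length = A.length + 1 := by
  have hlen := length_of_mem_words hz
  have htake : LatticeWord 0 (z.take m) := by
    have := hz.2.1
    rw [← List.take_append_drop m z] at this
    exact (append_iff.1 this).1
  have hglue := glue_unglue hz.2.1 k m
  rw [h] at hglue
  rw [unglue, Prod.mk.injEq, Prod.mk.injEq] at h
  obtain ⟨rfl, rfl, -⟩ := h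
  refine ⟨hglue.symm, ?_, ?_, ?_⟩
  · rw [List.take_append_drop]
    exact evac_latticeWord htake
  all_goals
    simp only [List.length_append, List.length_cons] at hlen
    simp only [List.length_take, List.length_drop, length_evac]
    lia

/-- The part of a tableau word that survives when its first piece is replaced by another one of
the same shape and the same length `k`; `m` is as in `unglue`. -/
def context (k m : ℕ) (z : List ℕ) : (ℕ → ℕ) × List ℕ × List ℕ :=
  (shape 0 (unglue k m z).1, (unglue k m z).2)

theorem eq_glue_of_context_eq (hz : z ∈ words (A ++ false :: K ++ B) ν) (hk : k = K.length + 1)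
    (hm : m = k + A.length + 1) {κ : ℕ → ℕ} (h : context k m z = (κ, V, W)) :
    ∃ q, z = glue q V W ∧ shape 0 q = κ ∧ LatticeWord 0 (q ++ V) ∧ q.length = k ∧
      V.length = A.length + 1 := by
  rcases hsplit : unglue k m z with ⟨q, V', W'⟩
  rw [context, hsplit] at h
  obtain ⟨hκ, hVW⟩ := Prod.mk.inj h
  obtain ⟨rfl, rfl⟩ := Prod.mk.inj hVW
  obtain ⟨hglue, hrest⟩ := unglue_of_mem_words hz hk hm hsplit
  exact ⟨q, hglue, hκ, hrest⟩

theorem ncard_words_context {κ : ℕ → ℕ} (hκ : LatticeWord κ (V ++ W)) (hk : k = K.length + 1)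
    (hV : V.length = A.length + 1) (hm : m = k + A.length + 1) :
    {z ∈ words (A ++ false :: K ++ B) (shape κ (V ++ W)) | context k m z = (κ, V, W)}.ncard =
      {u ∈ words K.reverse κ | ascents (lastRow u :: V) = false :: A.reverse ∧
        ascents (exitRow κ (vacatedRow u) V :: W) = B}.ncard := by
  have unglue_eq : ∀ u ∈ words K.reverse κ, unglue k m (glue u V W) = (u, V, W) := by
    rintro u hu
    have hlen : u.length = k := by rw [length_of_mem_words hu, List.length_reverse, hk]
    refine unglue_glue (append_iff.2 ⟨hu.2.1, ?_⟩) W hlen (by simp only [List.length_append]; lia)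
    rw [hu.2.2.2]
    exact (append_iff.1 hκ).1
  symm
  refine Set.ncard_congr (fun u _ => glue u V W) ?_ ?_ ?_
  · rintro u ⟨hu, hcond⟩
    have hlen : u.length = K.length + 1 := by rw [length_of_mem_words hu, List.length_reverse]
    have huV : LatticeWord 0 (u ++ V) := append_iff.2 ⟨hu.2.1, hu.2.2.2 ▸ (append_iff.1 hκ).1⟩
    refine ⟨(glue_mem_words_iff huV hlen hV).2 ?_, ?_⟩
    · rw [hu.2.2.2]
      exact ⟨⟨hu, hcond⟩, hκ, rfl⟩
    · rw [context, unglue_eq u hu, hu.2.2.2]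
  · rintro u u' ⟨hu, -⟩ ⟨hu', -⟩ heq
    exact congrArg Prod.fst
      ((unglue_eq u hu).symm.trans ((congrArg _ heq).trans (unglue_eq u' hu')))
  · rintro z ⟨hz, hcontext⟩
    obtain ⟨q, rfl, rfl, hlat, hq, -⟩ := eq_glue_of_context_eq hz hk hm hcontext
    exact ⟨q, ((glue_mem_words_iff hlat (hq.trans hk) hV).1 hz).1, rfl⟩

/-- Evacuating the piece with ascents `A ++ false :: K` brings the factor `K` to the front, and what
follows sees the initial tableau only through its shape, its last row and its vacated row. -/
theorem SwapLE.patternLE (hK : SwapLE K) (A : List Bool) (hB : B.head? ≠ some false) :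
    PatternLE (A ++ false :: K ++ B) (A ++ false :: K.reverse ++ B) := by
  intro ν
  let k := K.length + 1
  let m := k + A.length + 1
  refine ncard_le_ncard_of_fiberwise (finite_words _ ν) (finite_words _ ν) (context k m)
    (context k m) ?_
  rintro ⟨κ, V, W⟩
  rcases Set.eq_empty_or_nonempty
    {z ∈ words (A ++ false :: K ++ B) ν | context k m z = (κ, V, W)} with hempty | ⟨z, hz, hcontext⟩
  · rw [hempty, Set.ncard_empty]
    exact Nat.zero_le _
  obtain ⟨q, rfl, rfl, hlat, hq, hV⟩ := eq_glue_of_context_eq hz rfl rfl hcontext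
  obtain ⟨-, hκ, rfl⟩ := (glue_mem_words_iff hlat hq hV).1 hz
  rw [ncard_words_context hκ rfl hV rfl,
    ncard_words_context hκ (by rw [List.length_reverse]) hV rfl, List.reverse_reverse]
  exact hK.ncard_reverse_le _ (monotone_ascents_cons_eq V _)
    ((antitone_ascents_cons_eq W hB).comp_monotone (monotone_exitRow _ V))

end Context

section Rows

variable {l : List ℕ}

/-- The rows of length `l₀, l₁, …` of a ribbon traced from its top right box: `true` marks a step
down and `false` a step to the left. The initial `true` is a fictitious step into the first row. -/
def rowSteps (l : List ℕ) : List Bool := l.flatMap fun a => true :: List.replicate (a - 1) false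

/-- The steps between the consecutive boxes of a ribbon with row lengths `l`. -/
def rowPattern (l : List ℕ) : List Bool := (rowSteps l).tail

theorem rowSteps_cons (a : ℕ) (l : List ℕ) :
    rowSteps (a :: l) = true :: (List.replicate (a - 1) false ++ rowSteps l) := rfl

theorem rowSteps_append (l l' : List ℕ) : rowSteps (l ++ l') = rowSteps l ++ rowSteps l' :=
  List.flatMap_append

theorem rowSteps_eq_cons (hl : l ≠ []) : rowSteps l = true :: rowPattern l := by
  cases l with
  | nil => contradiction
  | cons a l => rfl

theorem rowPattern_append_cons (l : List ℕ) (a : ℕ) (l' : List ℕ) :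
    rowPattern (l ++ a :: l') =
      (rowSteps l ++ [true]).tail ++ (List.replicate (a - 1) false ++ rowSteps l') := by
  rw [rowPattern, rowSteps_append, rowSteps_cons, List.append_cons,
    List.tail_append_of_ne_nil (by simp)]

theorem rowSteps_reverse (l : List ℕ) :
    true :: (rowSteps l).reverse = rowSteps l.reverse ++ [true] := by
  induction l with
  | nil => rfl
  | cons a l ih =>
    rw [rowSteps_cons, List.reverse_cons, List.reverse_cons, rowSteps_append, List.reverse_append,
      ← List.cons_append, ← List.cons_append, ih]
    simp [rowSteps]

theorem rowPattern_reverse (l : List ℕ) : rowPattern l.reverse = (rowPattern l).reverse := by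
  rcases eq_or_ne l [] with rfl | hl
  · rfl
  · have h := rowSteps_reverse l
    rw [rowSteps_eq_cons hl, List.reverse_cons, ← List.cons_append, List.append_left_inj] at h
    rw [rowPattern, ← h, List.tail_cons]

theorem patternLE_transfer (γ ξ δ : List ℕ) (n m : ℕ) :
    PatternLE (rowPattern (γ ++ (n + m + 3) :: (ξ ++ (n + 1) :: δ)))
      (rowPattern (γ ++ (n + 2) :: (ξ.reverse ++ (n + m + 2) :: δ))) := by
  let K := List.replicate n false ++
    (false :: (List.replicate m false ++ rowSteps ξ) ++ [true]) ++ List.replicate n false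
  have hK : SwapLE K := (swapLE_false_true _).replicate_false n
  have hδ : (rowSteps δ).head? ≠ some false := by cases δ <;> simp [rowSteps]
  have hlong : List.replicate (n + m + 3 - 1) false =
      false :: List.replicate n false ++ false :: List.replicate m false := by
    rw [← List.replicate_succ, ← List.replicate_succ, List.replicate_append_replicate]
    congr 1
    lia
  have hmid : List.replicate (n + m + 2 - 1) false =
      List.replicate m false ++ false :: List.replicate n false := by
    rw [← List.replicate_succ, List.replicate_append_replicate]
    congr 1
    lia
  have hrev : rowSteps ξ.reverse ++ rowSteps ((n + m + 2) :: δ) =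
      true :: (rowSteps ξ).reverse ++ List.replicate (n + m + 2 - 1) false ++ rowSteps δ := by
    rw [rowSteps_reverse, rowSteps_cons]
    simp
  convert hK.patternLE (rowSteps γ ++ [true]).tail hδ using 1
  · rw [rowPattern_append_cons, rowSteps_append, rowSteps_cons, hlong]
    simp [K]
  · rw [rowPattern_append_cons, rowSteps_append, hrev, hmid]
    simp [K, List.replicate_succ]

/-- Any two members differ by at most one. -/
def IsEquitable (s : Multiset ℕ) : Prop := ∀ a ∈ s, ∀ b ∈ s, a ≤ b + 1

theorem exists_transfer (γ ξ δ : List ℕ) {a b : ℕ} (hb : 0 < b) (hab : b + 2 ≤ a) :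
    ∃ ξ' a' b', ξ'.Perm ξ ∧ a' + b' = a + b ∧ a' < a ∧ b < a' ∧ PatternLE
      (rowPattern (γ ++ a :: (ξ ++ b :: δ))) (rowPattern (γ ++ a' :: (ξ' ++ b' :: δ))) := by
  obtain ⟨n, rfl⟩ : ∃ n, b = n + 1 := ⟨b - 1, by lia⟩
  obtain ⟨m, rfl⟩ : ∃ m, a = n + m + 3 := ⟨a - n - 3, by lia⟩
  exact ⟨_, _, _, ξ.reverse_perm, by lia, by lia, by lia, patternLE_transfer γ ξ δ n m⟩

theorem exists_perm_split_of_not_isEquitable (h : ¬ IsEquitable l) :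
    ∃ γ a ξ b δ, b + 2 ≤ a ∧ (γ ++ a :: (ξ ++ b :: δ)).Perm l ∧
      PatternLE (rowPattern l) (rowPattern (γ ++ a :: (ξ ++ b :: δ))) := by
  simp only [IsEquitable, Multiset.mem_coe, not_forall, not_le] at h
  obtain ⟨a, ha, b, hb, hab⟩ := h
  obtain ⟨s, t, rfl⟩ := List.append_of_mem ha
  rcases List.mem_append.1 hb with hs | ht
  · obtain ⟨γ, ξ, rfl⟩ := List.append_of_mem hs
    have hrev : (γ ++ b :: ξ ++ a :: t).reverse =
        t.reverse ++ a :: (ξ.reverse ++ b :: γ.reverse) := by simp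
    refine ⟨t.reverse, a, ξ.reverse, b, γ.reverse, hab, hrev ▸ List.reverse_perm _, ?_⟩
    rw [← hrev, rowPattern_reverse]
    exact patternLE_reverse _
  · obtain ⟨ξ, δ, rfl⟩ := List.append_of_mem (List.mem_of_ne_of_mem (by lia) ht)
    exact ⟨s, a, ξ, b, δ, hab, List.Perm.refl _, PatternLE.refl _⟩

theorem exists_patternLE_of_not_isEquitable (h0 : 0 ∉ l) (h : ¬ IsEquitable l) :
    ∃ l' : List ℕ, 0 ∉ l' ∧ l'.length = l.length ∧ l'.sum = l.sum ∧
      (l'.map (· ^ 2)).sum < (l.map (· ^ 2)).sum ∧ PatternLE (rowPattern l) (rowPattern l') := by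
  obtain ⟨γ, a, ξ, b, δ, hab, hperm, hle⟩ := exists_perm_split_of_not_isEquitable h
  have hb : 0 < b := Nat.pos_of_ne_zero fun hb => h0 (hperm.subset (by simp [hb]))
  obtain ⟨ξ', a', b', hξ, hsum, ha', hba', hle'⟩ := exists_transfer γ ξ δ hb hab
  refine ⟨_, ?_, ?_, ?_, ?_, hle.trans hle'⟩
  · rw [← hperm.mem_iff] at h0
    simp only [List.mem_append, List.mem_cons, hξ.mem_iff] at h0 ⊢
    lia
  · rw [← hperm.length_eq]
    simp [hξ.length_eq]
  · rw [← hperm.sum_eq]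
    simp only [List.sum_append, List.sum_cons, hξ.sum_eq]
    lia
  · rw [← (hperm.map _).sum_eq]
    simp only [List.map_append, List.map_cons, List.sum_append, List.sum_cons,
      (hξ.map (· ^ 2)).sum_eq]
    nlinarith

theorem exists_isEquitable_patternLE (h0 : 0 ∉ l) :
    ∃ l' : List ℕ, 0 ∉ l' ∧ l'.length = l.length ∧ l'.sum = l.sum ∧ IsEquitable l' ∧
      PatternLE (rowPattern l) (rowPattern l') := by
  induction hn : (l.map (· ^ 2)).sum using Nat.strong_induction_on generalizing l with
  | _ n ih =>
    by_cases h : IsEquitable l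
    · exact ⟨l, h0, rfl, rfl, h, PatternLE.refl _⟩
    · obtain ⟨l₁, h0₁, hlen₁, hsum₁, hlt, hle₁⟩ := exists_patternLE_of_not_isEquitable h0 h
      obtain ⟨l', h0', hlen, hsum, hl', hle⟩ := ih _ (hn ▸ hlt) h0₁ rfl
      exact ⟨l', h0', hlen.trans hlen₁, hsum.trans hsum₁, hl', hle₁.trans hle⟩

end Rows

section Steps

variable {l u v w : List ℕ}

/-- The ascent pattern of a word that is preceded by a fictitious smaller letter. -/
def steps (w : List ℕ) : List Bool := if w = [] then [] else true :: ascents w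

theorem steps_of_ne_nil (hw : w ≠ []) : steps w = true :: ascents w := if_neg hw

theorem length_steps (w : List ℕ) : (steps w).length = w.length := by
  rcases eq_or_ne w [] with rfl | hw
  · rfl
  · rw [steps_of_ne_nil hw, List.length_cons, ← length_of_ascents hw]

theorem ascents_cons_eq_steps {x : ℕ} (h : (ascents (x :: w)).head? ≠ some false) :
    ascents (x :: w) = steps w := by
  cases w with
  | nil => rfl
  | cons y w =>
    have hxy : x < y := by simpa [ascents_cons_cons] using h
    rw [steps_of_ne_nil (List.cons_ne_nil y w), ascents_cons_cons, decide_eq_true hxy]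

theorem steps_append (hv : v ≠ []) (w : List ℕ) :
    steps (v ++ w) = steps v ++ ascents (lastRow v :: w) := by
  rw [steps_of_ne_nil hv, steps_of_ne_nil (List.append_ne_nil_of_left_ne_nil hv w),
    ascents_append hv, List.cons_append]

theorem lastRow_mem (hv : v ≠ []) : lastRow v ∈ v := by
  obtain ⟨u, e, rfl⟩ := List.eq_nil_or_concat' v |>.resolve_left hv
  simp [lastRow_concat]

theorem steps_append_of_lt (h : ∀ x ∈ v, ∀ y ∈ w.head?, x < y) :
    steps (v ++ w) = steps v ++ steps w := by
  rcases eq_or_ne v [] with rfl | hv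
  · rfl
  · rw [steps_append hv, ascents_cons_eq_steps]
    cases w with
    | nil => simp [ascents]
    | cons y w =>
      have := h (lastRow v) (lastRow_mem hv) y rfl
      simp [ascents_cons_cons, this]

theorem ascents_eq_replicate_false_iff :
    ascents u = List.replicate (u.length - 1) false ↔ u.Pairwise (· ≥ ·) := by
  rw [← List.isChain_iff_pairwise]
  induction u using List.twoStepInduction with
  | nil => simp [ascents]
  | singleton x => simp [ascents]
  | cons_cons x y u _ ih =>
    rw [List.isChain_cons_cons, ← ih]
    simp [ascents_cons_cons, List.replicate_succ]

theorem ascents_eq_rowPattern_iff (hw : w ≠ []) (hl : l ≠ []) :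
    ascents w = rowPattern l ↔ steps w = rowSteps l := by
  rw [steps_of_ne_nil hw, rowSteps_eq_cons hl, List.cons_inj_right]

theorem head?_rowSteps_ne (l : List ℕ) : (rowSteps l).head? ≠ some false := by
  cases l <;> simp [rowSteps]

theorem exists_append_of_steps_eq_cons {a : ℕ} (ha : a ≠ 0) (h : steps w = rowSteps (a :: l)) :
    ∃ u v, w = u ++ v ∧ u.length = a ∧ u.Pairwise (· ≥ ·) ∧
      ascents (lastRow u :: v) = rowSteps l := by
  have hlen := congrArg List.length h
  rw [length_steps, rowSteps_cons, List.length_cons, List.length_append,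
    List.length_replicate] at hlen
  have htake : (w.take a).length = a := by rw [List.length_take]; lia
  have hne : w.take a ≠ [] := List.ne_nil_of_length_pos (by lia)
  rw [← List.take_append_drop a w, steps_append hne, rowSteps_cons, ← List.cons_append] at h
  obtain ⟨hrow, hrest⟩ := List.append_inj h (by
    rw [length_steps, htake, List.length_cons, List.length_replicate]; lia)
  rw [steps_of_ne_nil hne, List.cons_inj_right] at hrow
  refine ⟨w.take a, w.drop a, (List.take_append_drop a w).symm, htake, ?_, hrest⟩
  rw [← ascents_eq_replicate_false_iff, hrow, htake]

theorem steps_eq_of_ascents_cons_eq_rowSteps {x : ℕ} (h : ascents (x :: v) = rowSteps l) :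
    steps v = rowSteps l := by
  rw [← h, ascents_cons_eq_steps (h ▸ head?_rowSteps_ne l)]

theorem steps_eq_rowSteps_nil : steps w = rowSteps [] ↔ w = [] := by
  rw [← List.length_eq_zero_iff, ← length_steps, List.length_eq_zero_iff]
  rfl

theorem exists_flatten_of_steps_eq (h0 : 0 ∉ l) (h : steps w = rowSteps l) :
    ∃ R : List (List ℕ), R.flatten = w ∧ R.map List.length = l ∧ ∀ u ∈ R, u.Pairwise (· ≥ ·) := by
  induction l generalizing w with
  | nil => exact ⟨[], by simp [steps_eq_rowSteps_nil.1 h]⟩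
  | cons a l ih =>
    obtain ⟨ha, h0⟩ := List.ne_and_not_mem_of_not_mem_cons h0
    obtain ⟨u, v, rfl, hlen, hu, hv⟩ := exists_append_of_steps_eq_cons ha.symm h
    obtain ⟨R, rfl, hlR, hR⟩ := ih h0 (steps_eq_of_ascents_cons_eq_rowSteps hv)
    exact ⟨u :: R, rfl, by rw [List.map_cons, hlen, hlR], List.forall_mem_cons.2 ⟨hu, hR⟩⟩

theorem lt_of_ascents_cons_eq_rowSteps {x : ℕ} (hv : v.Pairwise (· ≤ ·))
    (h : ascents (x :: v) = rowSteps l) {y : ℕ} (hy : y ∈ v) : x < y := by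
  cases v with
  | nil => simp at hy
  | cons z v =>
    have hxz : x < z := by
      simpa [← h, ascents_cons_cons] using head?_rowSteps_ne l
    rcases List.mem_cons.1 hy with rfl | hy
    · exact hxz
    · exact hxz.trans_le (List.rel_of_pairwise_cons hv hy)

theorem map_count_toFinset_append {x : ℕ} (hu : u ≠ []) (hux : ∀ y ∈ u, y = x) (hx : x ∉ v) :
    (u ++ v).toFinset.val.map (u ++ v).count =
      u.length ::ₘ v.toFinset.val.map v.count := by
  have hset : (u ++ v).toFinset = insert x v.toFinset := by
    obtain ⟨y, hy⟩ := List.exists_mem_of_ne_nil u hu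
    ext z
    simp only [List.toFinset_append, Finset.mem_union, List.mem_toFinset, Finset.mem_insert]
    grind
  rw [hset, Finset.insert_val_of_notMem (by simpa using hx), Multiset.map_cons, List.count_append,
    List.count_eq_length.2 fun y hy => (hux y hy).symm, List.count_eq_zero_of_not_mem hx]
  refine congrArg _ (Multiset.map_congr rfl fun y hy => ?_)
  have hyv : y ∈ v := by simpa using hy
  rw [List.count_append, List.count_eq_zero_of_not_mem fun hyu => hx (hux y hyu ▸ hyv), zero_add]

/-- Applied to the row indices of the boxes along a ribbon, this says that the ribbon has row
lengths `l`. -/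
theorem map_count_toFinset_of_steps_eq (hw : w.Pairwise (· ≤ ·)) (h0 : 0 ∉ l)
    (h : steps w = rowSteps l) : w.toFinset.val.map w.count = l := by
  induction l generalizing w with
  | nil => simp [steps_eq_rowSteps_nil.1 h]
  | cons a l ih =>
    obtain ⟨ha, hl0⟩ := List.ne_and_not_mem_of_not_mem_cons h0
    obtain ⟨u, v, rfl, rfl, hu, hv⟩ := exists_append_of_steps_eq_cons ha.symm h
    obtain ⟨hule, hvle, -⟩ := List.pairwise_append.1 hw
    have hne : u ≠ [] := List.ne_nil_of_length_pos (by lia)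
    have heq : u.Pairwise (· = ·) := hule.imp₂ (fun _ _ => le_antisymm) hu
    have hconst (y) (hy : y ∈ u) : y = lastRow u :=
      heq.forall_of_forall (R := (· = ·)) (fun _ _ => rfl) hy (lastRow_mem hne)
    rw [map_count_toFinset_append hne hconst
      fun hx => (lt_of_ascents_cons_eq_rowSteps hvle hv hx).false,
      ih hvle hl0 (steps_eq_of_ascents_cons_eq_rowSteps hv), Multiset.cons_coe]

theorem exists_rowSteps_eq (p : List Bool) : ∃ l, 0 ∉ l ∧ rowSteps l = true :: p := by
  induction p with
  | nil => exact ⟨[1], by simp [rowSteps]⟩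
  | cons b p ih =>
    obtain ⟨l, h0, hl⟩ := ih
    cases b with
    | true => exact ⟨1 :: l, by simp [h0], by simp [rowSteps_cons, hl]⟩
    | false =>
      have hne : l ≠ [] := by
        rintro rfl
        simp [rowSteps] at hl
      obtain ⟨_ | a, l, rfl⟩ := List.exists_cons_of_ne_nil hne
      · simp at h0
      · refine ⟨(a + 2) :: l, by simpa using h0, ?_⟩
        rw [rowSteps_cons] at hl ⊢
        simpa [List.replicate_succ] using hl

theorem exists_rowPattern_eq (p : List Bool) : ∃ l, 0 ∉ l ∧ l ≠ [] ∧ rowPattern l = p := by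
  obtain ⟨l, h0, hl⟩ := exists_rowSteps_eq p
  exact ⟨l, h0, by rintro rfl; simp [rowSteps] at hl, by simp [rowPattern, hl]⟩

end Steps

section Strips

variable {μ : ℕ → ℕ} {l u w : List ℕ} {R : List (List ℕ)}

theorem le_shape (μ : ℕ → ℕ) (w : List ℕ) : μ ≤ shape μ w := fun j => by
  rw [shape_apply]
  exact Nat.le_add_right _ _

theorem add_length_le_shape_zero {x : ℕ} (hu : LatticeWord μ (x :: u))
    (hsorted : (x :: u).Pairwise (· ≥ ·)) : μ x + (x :: u).length ≤ shape μ (x :: u) 0 := by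
  induction u generalizing μ x with
  | nil =>
    have := hu.2 (Nat.zero_le x)
    rwa [addBox_self] at this
  | cons y u ih =>
    obtain ⟨hx, hsorted⟩ := List.pairwise_cons.1 hsorted
    have hyx := hu.2.antitone (hx y List.mem_cons_self)
    rw [addBox_self] at hyx
    have := ih hu.2 hsorted
    rw [shape_cons, List.length_cons]
    lia

theorem length_le_shape_zero (hu : LatticeWord μ u) (hsorted : u.Pairwise (· ≥ ·)) :
    u.length ≤ shape μ u 0 := by
  cases u with
  | nil => exact Nat.zero_le _
  | cons x u => exact (Nat.le_add_left _ _).trans (add_length_le_shape_zero hu hsorted)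

theorem shape_succ_le (hu : LatticeWord μ u) (hsorted : u.Pairwise (· ≥ ·)) (i : ℕ) :
    shape μ u (i + 1) ≤ μ i := by
  induction u generalizing μ with
  | nil => exact hu i.le_succ
  | cons x u ih =>
    obtain ⟨hx, hsorted⟩ := List.pairwise_cons.1 hsorted
    rcases le_or_gt x i with hxi | hix
    · rw [shape_apply, List.count_eq_zero_of_not_mem (by grind)]
      exact hu.antitone i.le_succ
    · have := ih hu.2 hsorted
      rwa [addBox_of_ne _ hix.ne] at this

theorem shape_flatten_add_length_le (hw : LatticeWord μ R.flatten)
    (hR : ∀ u ∈ R, u.Pairwise (· ≥ ·)) (i : ℕ) : shape μ R.flatten (i + R.length) ≤ μ i := by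
  induction R generalizing μ i with
  | nil => exact le_rfl
  | cons u R ih =>
    obtain ⟨hu, hR⟩ := List.forall_mem_cons.1 hR
    rw [List.flatten_cons, append_iff] at hw
    rw [List.flatten_cons, shape_append, List.length_cons, add_comm R.length, ← add_assoc]
    exact (ih hw.2 hR (i + 1)).trans (shape_succ_le hw.1 hu i)

/-- The factors of `R` are horizontal strips: two boxes of the same strip are never in the same
column, and every strip adds at most one new row. -/
theorem length_mem_Icc_shape (hw : LatticeWord 0 R.flatten) (hR : ∀ u ∈ R, u.Pairwise (· ≥ ·))
    (hu : u ∈ R) : u.length ∈ Set.Icc (shape 0 R.flatten (R.length - 1)) (shape 0 R.flatten 0) := by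
  obtain ⟨S, T, rfl⟩ := List.append_of_mem hu
  simp only [List.forall_mem_append, List.forall_mem_cons] at hR
  obtain ⟨hS, hu, hT⟩ := hR
  rw [List.flatten_append, List.flatten_cons, append_iff, append_iff] at hw
  rw [List.flatten_append, List.flatten_cons, shape_append, shape_append]
  refine ⟨?_, (length_le_shape_zero hw.2.1 hu).trans (le_shape _ _ 0)⟩
  have hzero : shape 0 S.flatten S.length = 0 := by
    simpa using shape_flatten_add_length_le hw.1 hS 0
  have hlast : (S ++ u :: T).length - 1 = S.length + T.length := by simp
  rw [hlast]
  refine (shape_flatten_add_length_le hw.2.2 hT S.length).trans ?_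
  rw [shape_apply, hzero, zero_add]
  exact List.count_le_length

theorem shape_last_add_one_lt_of_not_isEquitable (h0 : 0 ∉ l) (hl : ¬ IsEquitable l)
    (hw : LatticeWord 0 w) (h : steps w = rowSteps l) :
    shape 0 w (l.length - 1) + 1 < shape 0 w 0 := by
  obtain ⟨R, rfl, rfl, hR⟩ := exists_flatten_of_steps_eq h0 h
  simp only [IsEquitable, Multiset.mem_coe, List.mem_map, not_forall, not_le] at hl
  obtain ⟨_, ⟨u, hu, rfl⟩, _, ⟨v, hv, rfl⟩, huv⟩ := hl
  rw [List.length_map]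
  have := (length_mem_Icc_shape hw hR hu).2
  have := (length_mem_Icc_shape hw hR hv).1
  lia

end Strips

section NearRectangle

variable {k j t : ℕ} {l : List ℕ}

/-- The partition with `j` parts of which the first `t` are `k + 1` and the others are `k`. -/
def nearRectangle (k j t : ℕ) (i : ℕ) : ℕ := if i < t then k + 1 else if i < j then k else 0

theorem replicate_latticeWord {μ : ℕ → ℕ} {c : ℕ} (hμ : Antitone μ)
    (h : ∀ i < j, μ j + c ≤ μ i) : LatticeWord μ (List.replicate c j) := by
  induction c generalizing μ with
  | zero => exact hμ
  | succ c ih =>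
    refine ⟨hμ, ih (fun a b hab => ?_) fun i hi => ?_⟩
    · have := hμ hab
      have := h a
      simp only [addBox]
      grind
    · rw [addBox_self, addBox_of_ne _ hi.ne]
      have := h i hi
      lia

theorem antitone_nearRectangle (k j t : ℕ) : Antitone (nearRectangle k j t) := by
  intro a b hab
  simp only [nearRectangle]
  grind

theorem nearRectangle_latticeWord_replicate (ht : t ≤ j) :
    LatticeWord (nearRectangle k j t) (List.replicate k j) := by
  refine replicate_latticeWord (antitone_nearRectangle k j t) fun i hi => ?_
  simp only [nearRectangle]
  grind

theorem shape_nearRectangle_replicate (ht : t ≤ j) :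
    shape (nearRectangle k j t) (List.replicate k j) = nearRectangle k (j + 1) t := by
  funext i
  rw [shape_apply, List.count_replicate]
  simp only [nearRectangle]
  grind

theorem addBox_nearRectangle (ht : t < j) :
    addBox (nearRectangle k j t) t = nearRectangle k j (t + 1) := by
  funext i
  simp only [nearRectangle, addBox]
  grind

/-- A row of length `a` is filled with `k` letters `j` and, if `a ≠ k`, one letter `t`. -/
theorem exists_row_word (hk : 0 < k) {a : ℕ} (ha : a = k ∨ a = k + 1) (ht : t ≤ j) :
    ∃ b t', t' ≤ j + 1 ∧ LatticeWord (nearRectangle k j t) b ∧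
      shape (nearRectangle k j t) b = nearRectangle k (j + 1) t' ∧ steps b = rowSteps [a] ∧
      b.head? = some j ∧ ∀ x ∈ b, x ≤ j := by
  have hlat := nearRectangle_latticeWord_replicate (k := k) ht
  have hshape := shape_nearRectangle_replicate (k := k) ht
  have hsteps : ∀ b : List ℕ, b ≠ [] → b.length = a → b.Pairwise (· ≥ ·) →
      steps b = rowSteps [a] := by
    rintro b hb rfl hsorted
    rw [steps_of_ne_nil hb, ascents_eq_replicate_false_iff.2 hsorted]
    simp [rowSteps]
  rcases ha with rfl | rfl
  · refine ⟨List.replicate a j, t, by lia, hlat, hshape, hsteps _ ?_ ?_ ?_, ?_, ?_⟩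
    all_goals simp [List.pairwise_replicate, hk.ne', List.head?_replicate]
  · refine ⟨List.replicate k j ++ [t], t + 1, by lia, concat_iff.2 ⟨hlat, ?_⟩, ?_,
      hsteps _ ?_ ?_ ?_, ?_, ?_⟩
    · rw [hshape, addBox_nearRectangle (by lia)]
      exact antitone_nearRectangle k _ _
    · rw [shape_concat, hshape, addBox_nearRectangle (by lia)]
    all_goals simp [List.pairwise_append, List.pairwise_replicate, hk.ne', List.head?_replicate]
    all_goals grind

theorem exists_nearRectangle_word (hk : 0 < k) (h : ∀ a ∈ l, a = k ∨ a = k + 1) :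
    ∃ w t, t ≤ l.length ∧ LatticeWord 0 w ∧ shape 0 w = nearRectangle k l.length t ∧
      steps w = rowSteps l ∧ ∀ x ∈ w, x < l.length := by
  induction l using List.reverseRecOn with
  | nil => exact ⟨[], 0, le_rfl, antitone_const, by funext i; simp [nearRectangle, shape], rfl,
      by simp⟩
  | append_singleton l a ih =>
    obtain ⟨w, t, ht, hw, hshape, hsteps, hlt⟩ := ih fun x hx => h x (List.mem_append_left _ hx)
    obtain ⟨b, t', ht', hb, hbshape, hbsteps, hhead, hle⟩ :=
      exists_row_word hk (h a (by simp)) ht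
    have hlen : (l ++ [a]).length = l.length + 1 := List.length_append
    rw [hlen]
    refine ⟨w ++ b, t', ht', append_iff.2 ⟨hw, hshape ▸ hb⟩, ?_, ?_, ?_⟩
    · rw [shape_append, hshape, hbshape]
    · rw [steps_append_of_lt, hsteps, hbsteps, rowSteps_append]
      simpa [hhead] using hlt
    · grind

theorem exists_word_of_isEquitable (h0 : 0 ∉ l) (hl : l ≠ []) (hb : IsEquitable l) :
    ∃ w ν, w ∈ words (rowPattern l) ν ∧ ν 0 ≤ ν (l.length - 1) + 1 := by
  obtain ⟨k, hkl, hk⟩ := l.toFinset.exists_min_image id (by simpa using hl)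
  simp only [List.mem_toFinset, id] at hkl hk
  have hk0 : 0 < k := Nat.pos_of_ne_zero fun hk0 => h0 (hk0 ▸ hkl)
  obtain ⟨w, t, -, hw, hshape, hsteps, -⟩ := exists_nearRectangle_word hk0 fun a ha => by
    have := hk a ha
    have := hb a ha k hkl
    lia
  have hwne : w ≠ [] := by
    rintro rfl
    rw [rowSteps_eq_cons hl] at hsteps
    exact List.cons_ne_nil _ _ hsteps.symm
  refine ⟨w, _, ⟨hwne, hw, (ascents_eq_rowPattern_iff hwne hl).2 hsteps, hshape⟩, ?_⟩
  have := List.length_pos_of_ne_nil hl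
  simp only [nearRectangle]
  grind

end NearRectangle

end LatticeWord

section Chains

variable {α : Type*} {R : α → α → Prop} {L : List α} {x y : α}

theorem eq_or_rel_or_rel_of_isChain [IsTrans α R] (h : L.IsChain R) (hx : x ∈ L) (hy : y ∈ L) :
    x = y ∨ R x y ∨ R y x := by
  have hsymm : Std.Symm fun c d => c = d ∨ R c d ∨ R d c := ⟨fun c d => by grind⟩
  have hpw : L.Pairwise fun c d => c = d ∨ R c d ∨ R d c :=
    h.pairwise.imp fun h => Or.inr (Or.inl h)
  exact hpw.forall_of_forall (by simp) hx hy

theorem iff_of_isChain_iff {p : α → Prop} (h : L.IsChain fun c d => p c ↔ p d)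
    (hx : x ∈ L) (hy : y ∈ L) : p x ↔ p y := by
  have : IsTrans α fun c d => p c ↔ p d := ⟨fun _ _ _ => Iff.trans⟩
  rcases eq_or_rel_or_rel_of_isChain h hx hy with rfl | h | h
  · rfl
  · exact h
  · exact h.symm

theorem exists_mem_apply_eq_of_isChain {f : α → ℤ} (h : L.IsChain fun c d => f d = f c + 1)
    (hx : x ∈ L) (hy : y ∈ L) {n : ℤ} (hxn : f x ≤ n) (hny : n ≤ f y) : ∃ z ∈ L, f z = n := by
  by_contra! hn
  have hside : L.IsChain fun c d => f c < n ↔ f d < n :=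
    h.imp_of_mem_imp fun c d hc hd hcd => by
      have := hn c hc
      have := hn d hd
      lia
  have := (iff_of_isChain_iff hside hx hy).1 (hxn.lt_of_ne (hn x hx))
  lia

end Chains

/-- One step along a ribbon in reverse reading order: to the box on the left, or to the box
below. -/
def RibbonStep (c d : ℕ × ℕ) : Prop := (d.1 = c.1 ∧ c.2 = d.2 + 1) ∨ (d.1 = c.1 + 1 ∧ d.2 = c.2)

/-- The strict order that ribbon steps generate: `d` is weakly south-west of `c`, and `d ≠ c`. -/
def Precedes (c d : ℕ × ℕ) : Prop := c.1 ≤ d.1 ∧ d.2 ≤ c.2 ∧ (c.1 < d.1 ∨ d.2 < c.2)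

instance : IsTrans (ℕ × ℕ) Precedes := ⟨fun _ _ _ h h' => by unfold Precedes at *; lia⟩

namespace RibbonStep

variable {L : List (ℕ × ℕ)} {c d x y z : ℕ × ℕ}

theorem precedes (h : RibbonStep c d) : Precedes c d := by
  unfold RibbonStep at h
  unfold Precedes
  lia

theorem isChain_precedes (hL : L.IsChain RibbonStep) : L.IsChain Precedes :=
  hL.imp fun _ _ => precedes

theorem nodup (hL : L.IsChain RibbonStep) : L.Nodup :=
  (isChain_precedes hL).pairwise.imp fun h => by
    rintro rfl
    simp [Precedes] at h

theorem eq_or_precedes_or_precedes (hL : L.IsChain RibbonStep) (hx : x ∈ L) (hy : y ∈ L) :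
    x = y ∨ Precedes x y ∨ Precedes y x :=
  eq_or_rel_or_rel_of_isChain (isChain_precedes hL) hx hy

theorem mem_of_mem_Icc (hL : L.IsChain RibbonStep) (hx : x ∈ L) (hy : y ∈ L)
    (hxz : x ≤ z) (hzy : z ≤ y) : z ∈ L := by
  -- A ribbon meets each diagonal between two of its boxes, and here only `z` can be the meeting
  -- point, since `x ≤ y` forces `x` and `y` into a common row or column.
  let diag (c : ℕ × ℕ) : ℤ := c.1 - c.2
  have hdiag : L.IsChain fun c d => diag d = diag c + 1 :=
    hL.imp fun c d h => by
      simp only [RibbonStep, diag] at h ⊢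
      lia
  have hxy := eq_or_precedes_or_precedes hL hx hy
  rw [Prod.le_def] at hxz hzy
  rw [Prod.ext_iff] at hxy
  unfold Precedes at hxy
  obtain ⟨w, hw, hwz⟩ : ∃ w ∈ L, diag w = diag z := by
    by_cases hrow : x.1 = y.1
    · exact exists_mem_apply_eq_of_isChain hdiag hy hx (by lia) (by lia)
    · exact exists_mem_apply_eq_of_isChain hdiag hx hy (by lia) (by lia)
  have hxw := eq_or_precedes_or_precedes hL hx hw
  have hwy := eq_or_precedes_or_precedes hL hw hy
  rw [Prod.ext_iff] at hxw hwy
  unfold Precedes at hxw hwy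
  have : z = w := Prod.ext (by lia) (by lia)
  rwa [this]

end RibbonStep

namespace SkewShape

/-- The list `L` walks through the boxes of the nonempty shape `A` by ribbon steps, from the
north-east end to the south-west end. -/
structure IsPath (A : SkewShape) (L : List (ℕ × ℕ)) : Prop where
  isChain : L.IsChain RibbonStep
  cells_eq : A.cells = L.toFinset
  ne_nil : L ≠ []

variable {A : SkewShape} {L : List (ℕ × ℕ)}

theorem exists_isPath_of_isChain (hL : L.IsChain RibbonStep) (hne : L ≠ []) :
    ∃ R : SkewShape, R.IsPath L := by
  let O : Finset (ℕ × ℕ) := L.toFinset.biUnion Finset.Iic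
  have mem_O {x} : x ∈ O ↔ ∃ c ∈ L, x ≤ c := by simp [O]
  have hO : IsLowerSet (O : Set (ℕ × ℕ)) := fun a b hba ha => by
    obtain ⟨c, hc, hac⟩ := mem_O.1 ha
    exact mem_O.2 ⟨c, hc, hba.trans hac⟩
  have hI : IsLowerSet ((O \ L.toFinset : Finset (ℕ × ℕ)) : Set (ℕ × ℕ)) := fun a b hba ha => by
    simp only [Finset.coe_sdiff, Set.mem_sdiff, Finset.mem_coe, List.mem_toFinset] at ha ⊢
    refine ⟨hO hba ha.1, fun hb => ha.2 ?_⟩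
    obtain ⟨c, hc, hac⟩ := mem_O.1 ha.1
    exact RibbonStep.mem_of_mem_Icc hL hb hc hba hac
  have hLO : L.toFinset ⊆ O := fun x hx => mem_O.2 ⟨x, List.mem_toFinset.1 hx, le_rfl⟩
  exact ⟨⟨⟨O, hO⟩, ⟨O \ L.toFinset, hI⟩, Finset.sdiff_subset⟩, hL,
    Finset.sdiff_sdiff_eq_self hLO, hne⟩

namespace IsPath

variable (hL : A.IsPath L)
include hL

theorem mem_cells {c : ℕ × ℕ} : c ∈ A.cells ↔ c ∈ L := by rw [hL.cells_eq, List.mem_toFinset]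

theorem not_disconnected : ¬ A.Disconnected := by
  rintro ⟨B, C, ⟨b, hb⟩, ⟨c, hc⟩, hunion, hinter, hsep⟩
  have hmem {x} : x ∈ L ↔ x ∈ B ∨ x ∈ C := by rw [← hL.mem_cells, ← hunion, Finset.mem_union]
  have hdisj {x} : ¬ (x ∈ B ∧ x ∈ C) := by simp [← Finset.mem_inter, hinter]
  have hside : L.IsChain fun x y => x ∈ B ↔ y ∈ B :=
    hL.isChain.imp_of_mem_imp fun x y hx hy hxy => by
      unfold RibbonStep at hxy
      have := hsep x
      have := hsep y
      grind
  exact hdisj ⟨(iff_of_isChain_iff hside (hmem.2 (.inl hb)) (hmem.2 (.inr hc))).1 hb, hc⟩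

theorem ribbon : A.Ribbon := by
  obtain ⟨c, hc⟩ := List.exists_mem_of_ne_nil L hL.ne_nil
  refine ⟨⟨⟨c, hL.mem_cells.2 hc⟩, hL.not_disconnected⟩, ?_⟩
  rintro i j ⟨hnw, -, -, hse⟩
  have := RibbonStep.eq_or_precedes_or_precedes hL.isChain (hL.mem_cells.1 hnw)
    (hL.mem_cells.1 hse)
  simp [Precedes] at this

end IsPath

end SkewShape

instance : IsTrans (ℕ × ℕ) ReadsBefore := ⟨fun _ _ _ h h' => by unfold ReadsBefore at *; lia⟩

instance : Std.Antisymm ReadsBefore :=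
  ⟨fun _ _ h h' => by unfold ReadsBefore at *; exact Prod.ext (by lia) (by lia)⟩

instance : Std.Total ReadsBefore := ⟨fun _ _ => by unfold ReadsBefore; lia⟩

namespace SkewShape

variable {A : SkewShape} {c d x y z : ℕ × ℕ}

theorem mem_cells_of_mem_Icc (hx : x ∈ A.cells) (hy : y ∈ A.cells) (hxz : x ≤ z) (hzy : z ≤ y) :
    z ∈ A.cells := by
  simp only [cells, Finset.mem_sdiff] at *
  exact ⟨A.outer.isLowerSet hzy hy.1, fun hz => hx.2 (A.inner.isLowerSet hxz hz)⟩

namespace Ribbon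

variable (hA : A.Ribbon)
include hA

theorem not_lt_and_lt (hx : x ∈ A.cells) (hy : y ∈ A.cells) : ¬ (x.1 < y.1 ∧ x.2 < y.2) := by
  rintro ⟨hrow, hcol⟩
  have hmem {z} (hxz : x ≤ z) (hz : z ≤ (x.1 + 1, x.2 + 1)) : z ∈ A.cells :=
    mem_cells_of_mem_Icc hx hy hxz (hz.trans ⟨hrow, hcol⟩)
  exact hA.2 x.1 x.2 ⟨hx, hmem (by simp [Prod.le_def]) (by simp), hmem (by simp [Prod.le_def])
    (by simp), hmem (by simp [Prod.le_def]) le_rfl⟩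

theorem exists_ribbonStep (hc : c ∈ A.cells) (hd : d ∈ A.cells) (hdc : ¬ ReadsBefore d c) :
    ∃ s ∈ A.cells, RibbonStep c s := by
  -- Otherwise the boxes up to `c` and the boxes after `c` disconnect the ribbon.
  by_contra! hstep
  refine hA.1.2 ⟨A.cells.filter (ReadsBefore · c), A.cells.filter (¬ ReadsBefore · c),
    ⟨c, Finset.mem_filter.2 ⟨hc, refl c⟩⟩, ⟨d, by simp [hd, hdc]⟩,
    Finset.filter_union_filter_not_eq _ _,
    Finset.disjoint_iff_inter_eq_empty.1 (Finset.disjoint_filter_filter_not _ _ _),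
    fun b hb e he => ?_⟩
  obtain ⟨hb, hbc⟩ := Finset.mem_filter.1 hb
  obtain ⟨he, hec⟩ := Finset.mem_filter.1 he
  unfold ReadsBefore at hbc hec
  constructor
  · intro hrow
    have hleft : (c.1, c.2 - 1) ∈ A.cells :=
      mem_cells_of_mem_Icc he hc (Prod.le_def.2 ⟨by lia, by simp; lia⟩) (by simp [Prod.le_def])
    exact hstep _ hleft (.inl ⟨rfl, by simp; lia⟩)
  · intro hcol
    have := hA.not_lt_and_lt hb hc
    have hbelow : (c.1 + 1, c.2) ∈ A.cells :=
      mem_cells_of_mem_Icc hc he (by simp [Prod.le_def])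
        (Prod.le_def.2 ⟨by simp; lia, by simp; lia⟩)
    exact hstep _ hbelow (.inr ⟨rfl, rfl⟩)

theorem eq_of_ribbonStep {s : ℕ × ℕ} (hc : c ∈ A.cells) (hd : d ∈ A.cells) (hs : s ∈ A.cells)
    (hcs : RibbonStep c s) (hdc : ¬ ReadsBefore d c) (hds : ReadsBefore d s) : d = s := by
  have := hA.not_lt_and_lt hc hd
  have := hA.not_lt_and_lt hd hs
  unfold RibbonStep at hcs
  unfold ReadsBefore at hdc hds
  exact Prod.ext (by lia) (by lia)

theorem exists_isPath : ∃ L, A.IsPath L := by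
  let L := A.cells.sort ReadsBefore
  have hcells : A.cells = L.toFinset := (A.cells.sort_toFinset ReadsBefore).symm
  have hmem {c} : c ∈ L ↔ c ∈ A.cells := A.cells.mem_sort ReadsBefore
  have hsorted : L.Pairwise ReadsBefore := A.cells.pairwise_sort ReadsBefore
  have hnodup : L.Nodup := A.cells.sort_nodup ReadsBefore
  have hne : L ≠ [] := fun h => hA.1.1.ne_empty (by rw [hcells, h, List.toFinset_nil])
  refine ⟨L, List.isChain_iff_forall_rel_of_append_cons_cons.2 fun {c d u v} huv => ?_, hcells, hne⟩
  rw [huv] at hsorted hnodup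
  obtain ⟨-, hsuffix, hprefix⟩ := List.pairwise_append.1 hsorted
  rw [List.pairwise_cons, List.pairwise_cons] at hsuffix
  have hc : c ∈ A.cells := by simp [← hmem, huv]
  have hd : d ∈ A.cells := by simp [← hmem, huv]
  have hdc : ¬ ReadsBefore d c := fun h => by
    have : c = d := antisymm (hsuffix.1 d List.mem_cons_self) h
    simp [this, List.nodup_append] at hnodup
  obtain ⟨s, hs, hcs⟩ := hA.exists_ribbonStep hc hd hdc
  have hsc : ¬ ReadsBefore s c := by
    unfold RibbonStep at hcs
    unfold ReadsBefore
    lia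
  have hds : ReadsBefore d s := by
    have hsL := hmem.2 hs
    simp only [huv, List.mem_append, List.mem_cons] at hsL
    rcases hsL with hsu | rfl | rfl | hsv
    · exact absurd (hprefix s hsu c List.mem_cons_self) hsc
    · exact absurd (refl s) hsc
    · exact refl s
    · exact hsuffix.2.1 s hsv
  rwa [hA.eq_of_ribbonStep hc hd hs hcs hdc hds]

end Ribbon

end SkewShape

theorem card_filter_eq_count_map {α β : Type*} [DecidableEq α] [DecidableEq β] {f : α → β}
    {l : List α} (hl : l.Nodup) (b : β) :
    (l.toFinset.filter (f · = b)).card = (l.map f).count b := by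
  rw [List.count, List.countP_map, List.countP_eq_length_filter,
    ← List.toFinset_card_of_nodup (hl.filter _), List.toFinset_filter]
  simp only [Function.comp_apply, beq_iff_eq]

namespace RibbonStep

open LatticeWord

theorem exists_isChain_ascents_eq (p : List Bool) :
    ∃ L : List (ℕ × ℕ), L ≠ [] ∧ L.IsChain RibbonStep ∧ ascents (L.map Prod.fst) = p := by
  suffices h : ∀ i, ∃ L : List (ℕ × ℕ), ((i, p.count false) :: L).IsChain RibbonStep ∧
      ascents (((i, p.count false) :: L).map Prod.fst) = p by
    obtain ⟨L, hL⟩ := h 0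
    exact ⟨_, List.cons_ne_nil _ L, hL⟩
  induction p with
  | nil => exact fun i => ⟨[], List.isChain_singleton _, rfl⟩
  | cons b p ih =>
    intro i
    obtain ⟨L, hL, hp⟩ := ih (if b then i + 1 else i)
    refine ⟨_ :: L, List.isChain_cons_cons.2 ⟨?_, hL⟩, ?_⟩
    · cases b <;> simp [RibbonStep]
    · rw [List.map_cons] at hp
      rw [List.map_cons, List.map_cons, ascents_cons_cons, hp]
      cases b <;> simp

end RibbonStep

namespace SkewShape

open LatticeWord

/-- The word of a filling `T` along a path; as words start from the letter `0` while fillings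
start from the entry `1`, the entries are lowered by one. -/
def readingWord (T : ℕ × ℕ → ℕ) (L : List (ℕ × ℕ)) : List ℕ := L.map fun c => T c - 1

variable {A : SkewShape} {L M : List (ℕ × ℕ)} {T : ℕ × ℕ → ℕ}

theorem card_filter_eq_count_readingWord (hM : M.Nodup) (hT : ∀ c ∈ M, 1 ≤ T c) (k : ℕ) :
    (M.toFinset.filter fun c => T c = k + 1).card = (readingWord T M).count k := by
  rw [readingWord, ← card_filter_eq_count_map hM]
  congr 1
  refine Finset.filter_congr fun c hc => ?_
  have := hT c (List.mem_toFinset.1 hc)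
  lia

/-- The condition that a semistandard filling `T` imposes on boxes `c`, `d` of a ribbon, met in
this order along it. -/
def SsytPrecedes (T : ℕ × ℕ → ℕ) (c d : ℕ × ℕ) : Prop :=
  Precedes c d ∧ (c.1 = d.1 → T d ≤ T c) ∧ (c.2 = d.2 → T c < T d)

instance : IsTrans (ℕ × ℕ) (SsytPrecedes T) :=
  ⟨fun _ _ _ h h' => by unfold SsytPrecedes Precedes at *; lia⟩

theorem ssytPrecedes_iff_of_ribbonStep {c d : ℕ × ℕ} (h : RibbonStep c d) :
    SsytPrecedes T c d ↔ (T c < T d ↔ c.1 < d.1) := by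
  unfold RibbonStep at h
  unfold SsytPrecedes Precedes
  lia

theorem exists_readingWord_eq {w : List ℕ} (hL : L.Nodup) (hw : w.length = L.length) :
    ∃ T : ℕ × ℕ → ℕ, (∀ c ∈ L, 1 ≤ T c) ∧ (∀ c ∉ L, T c = 0) ∧ readingWord T L = w := by
  refine ⟨fun c => if c ∈ L then w.getD (L.idxOf c) 0 + 1 else 0, fun c hc => by simp [hc],
    fun c hc => if_neg hc, List.ext_getElem (by simp [readingWord, hw]) fun i hi hi' => ?_⟩
  simp [readingWord, hL.idxOf_getElem, hi']

namespace IsPath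

variable (hL : A.IsPath L)
include hL

theorem isSsyt_iff_isChain :
    A.IsSsyt T ↔ (∀ c ∈ L, 1 ≤ T c) ∧ L.IsChain (SsytPrecedes T) := by
  simp only [IsSsyt, hL.mem_cells]
  refine and_congr_right fun _ => ⟨fun ⟨hrow, hcol⟩ => ?_, fun h => ?_⟩
  · refine hL.isChain.imp_of_mem_imp fun (i, j) (i', j') hc hd hcd => ?_
    refine ⟨hcd.precedes, ?_, ?_⟩
    · rintro rfl
      exact hrow i j' j hd hc hcd.precedes.2.1
    · rintro rfl
      exact hcol i i' j hc hd (by have := hcd.precedes; unfold Precedes at this; lia)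
  · have hcomp {c d} (hc : c ∈ L) (hd : d ∈ L) := eq_or_rel_or_rel_of_isChain h hc hd
    unfold SsytPrecedes Precedes at hcomp
    refine ⟨fun i j j' hc hd hj => ?_, fun i i' j hc hd hi => ?_⟩
    · have := hcomp hc hd
      rw [Prod.ext_iff] at this
      grind
    · have := hcomp hc hd
      rw [Prod.ext_iff] at this
      lia

theorem isSsyt_iff :
    A.IsSsyt T ↔ (∀ c ∈ L, 1 ≤ T c) ∧
      ascents (readingWord T L) = ascents (L.map Prod.fst) := by
  rw [hL.isSsyt_iff_isChain, readingWord, ascents_map_eq_iff]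
  refine and_congr_right fun hT => ?_
  have hstep {c d} (hc : c ∈ L) (hd : d ∈ L) (hcd : RibbonStep c d) :
      SsytPrecedes T c d ↔ (T c - 1 < T d - 1 ↔ c.1 < d.1) := by
    have := hT c hc
    have := hT d hd
    rw [ssytPrecedes_iff_of_ribbonStep hcd]
    lia
  rw [List.isChain_iff_getElem, List.isChain_iff_getElem]
  exact forall₂_congr fun i hi => hstep (List.getElem_mem _) (List.getElem_mem _)
    (List.isChain_iff_getElem.1 hL.isChain i hi)

theorem readsBefore_iff_mem {c d : ℕ × ℕ} {u v : List (ℕ × ℕ)} (huv : L = u ++ d :: v) :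
    c ∈ L ∧ ReadsBefore c d ↔ c ∈ u ++ [d] := by
  have hpw := (RibbonStep.isChain_precedes hL.isChain).pairwise
  rw [huv, List.pairwise_append, List.pairwise_cons] at hpw
  obtain ⟨-, ⟨hafter, -⟩, hbefore⟩ := hpw
  simp only [huv, List.mem_append, List.mem_cons, List.not_mem_nil, or_false]
  constructor
  · rintro ⟨hc | rfl | hc, hcd⟩
    · exact .inl hc
    · exact .inr rfl
    · have := hafter c hc
      unfold Precedes at this
      unfold ReadsBefore at hcd
      lia
  · rintro (hc | rfl)
    · have := hbefore c hc d List.mem_cons_self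
      unfold Precedes at this
      unfold ReadsBefore
      exact ⟨.inl hc, by lia⟩
    · exact ⟨.inr (.inl rfl), refl c⟩

theorem card_readsBefore_eq_shape {d : ℕ × ℕ} {u v : List (ℕ × ℕ)} (huv : L = u ++ d :: v)
    (hT : ∀ c ∈ L, 1 ≤ T c) (k : ℕ) :
    (A.cells.filter fun c => T c = k + 1 ∧ ReadsBefore c d).card =
      shape 0 (readingWord T (u ++ [d])) k := by
  have hsub : (u ++ [d]).Sublist L := by simp [huv]
  rw [shape_apply, Pi.zero_apply, zero_add, ← card_filter_eq_count_readingWord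
    ((RibbonStep.nodup hL.isChain).sublist hsub) fun c hc => hT c (hsub.subset hc)]
  congr 1
  ext c
  rw [Finset.mem_filter, Finset.mem_filter, List.mem_toFinset, ← hL.readsBefore_iff_mem huv,
    hL.mem_cells]
  tauto

theorem isLR_iff :
    A.IsLR T ↔ (∀ c ∈ L, 1 ≤ T c) ∧ LatticeWord 0 (readingWord T L) ∧
      ascents (readingWord T L) = ascents (L.map Prod.fst) := by
  rw [IsLR, hL.isSsyt_iff, and_assoc, and_congr_right_iff]
  intro hT
  rw [and_comm, and_congr_left_iff]
  intro _
  rw [iff_antitone_shape]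
  refine ⟨fun h u v huv => ?_, fun h d hd k => ?_⟩
  · obtain ⟨M, N, rfl, rfl, rfl⟩ := List.map_eq_append_iff.1 huv
    rcases List.eq_nil_or_concat' M with rfl | ⟨M, d, rfl⟩
    · exact antitone_const
    · have hd : M ++ [d] ++ N = M ++ d :: N := by simp
      refine antitone_nat_of_succ_le fun k => ?_
      have := h d (hL.mem_cells.2 (by simp)) k
      rwa [hL.card_readsBefore_eq_shape hd hT, hL.card_readsBefore_eq_shape hd hT] at this
  · obtain ⟨u, v, huv⟩ := List.append_of_mem (hL.mem_cells.1 hd)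
    rw [hL.card_readsBefore_eq_shape huv hT, hL.card_readsBefore_eq_shape huv hT]
    exact h _ (readingWord T v) (by simp [huv, readingWord]) k.le_succ

theorem content_eq_shape (hT : ∀ c ∈ L, 1 ≤ T c) (k : ℕ) :
    A.content T (k + 1) = shape 0 (readingWord T L) k := by
  rw [content, hL.cells_eq, card_filter_eq_count_readingWord (RibbonStep.nodup hL.isChain) hT,
    shape_apply, Pi.zero_apply, zero_add]

theorem isLR_and_content_iff {lam : Multiset ℕ} :
    (A.IsLR T ∧ ∀ i, A.content T (i + 1) = part lam i) ↔
      (∀ c ∈ L, 1 ≤ T c) ∧ readingWord T L ∈ words (ascents (L.map Prod.fst)) (part lam) := by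
  have hne : readingWord T L ≠ [] := by simp [readingWord, hL.ne_nil]
  rw [hL.isLR_iff, and_assoc, and_congr_right_iff]
  intro hT
  simp only [hL.content_eq_shape hT, words, Set.mem_ofPred_eq, and_assoc, funext_iff,
    and_iff_right hne]

theorem exists_mem_LRset {lam : Multiset ℕ} {w : List ℕ}
    (hw : w ∈ words (ascents (L.map Prod.fst)) (part lam)) :
    ∃ T ∈ A.LRset lam, readingWord T L = w := by
  have hlen : w.length = L.length := by
    rw [length_of_mem_words hw, ← length_of_ascents (by simp [hL.ne_nil]), List.length_map]
  obtain ⟨T, hpos, hzero, rfl⟩ := exists_readingWord_eq (RibbonStep.nodup hL.isChain) hlen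
  obtain ⟨hLR, hcont⟩ := hL.isLR_and_content_iff.2 ⟨hpos, hw⟩
  exact ⟨T, ⟨hLR, fun c hc => hzero c (hL.mem_cells.not.1 hc), hcont⟩, rfl⟩

theorem ncard_LRset (lam : Multiset ℕ) :
    (A.LRset lam).ncard = (words (ascents (L.map Prod.fst)) (part lam)).ncard := by
  refine Set.ncard_congr (fun T _ => readingWord T L)
    (fun T hT => (hL.isLR_and_content_iff.1 ⟨hT.1, hT.2.2⟩).2)
    (fun T U hT hU hTU => funext fun c => ?_) fun w hw => ?_
  · by_cases hc : c ∈ A.cells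
    · have := List.map_inj_left.1 hTU c (hL.mem_cells.1 hc)
      have := hT.1.1.1 c hc
      have := hU.1.1.1 c hc
      lia
    · rw [hT.2.1 c hc, hU.2.1 c hc]
  · obtain ⟨T, hT, hTw⟩ := hL.exists_mem_LRset hw
    exact ⟨T, hT, hTw⟩

theorem mem_supp_iff {lam : Multiset ℕ} :
    lam ∈ A.supp ↔ 0 ∉ lam ∧ (words (ascents (L.map Prod.fst)) (part lam)).Nonempty := by
  refine and_congr_right fun _ => ⟨fun ⟨T, hT⟩ => ⟨_, (hL.isLR_and_content_iff.1 hT).2⟩, ?_⟩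
  rintro ⟨w, hw⟩
  obtain ⟨T, hT, -⟩ := hL.exists_mem_LRset hw
  exact ⟨T, hT.1, hT.2.2⟩

end IsPath

end SkewShape

theorem exists_part_eq {f : ℕ → ℕ} (hf : Antitone f) {n : ℕ} (hn : f n = 0) :
    ∃ lam : Multiset ℕ, 0 ∉ lam ∧ part lam = f := by
  classical
  have hex : ∃ n, f n = 0 := ⟨n, hn⟩
  refine ⟨((List.range (Nat.find hex)).map f : List ℕ), ?_, funext fun i => ?_⟩
  · rw [Multiset.mem_coe, List.mem_map]
    rintro ⟨a, ha, h⟩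
    exact Nat.find_min hex (List.mem_range.1 ha) h
  · have hsorted : ((List.range (Nat.find hex)).map f).Pairwise (· ≥ ·) :=
      List.pairwise_map.2 (List.pairwise_lt_range.imp fun h => hf h.le)
    rw [part, Multiset.coe_sort, List.mergeSort_eq_self _ (by simpa using hsorted)]
    rcases lt_or_ge i (Nat.find hex) with hi | hi
    · rw [List.getD_eq_getElem _ _ (by simpa using hi)]
      simp
    · rw [List.getD_eq_default _ _ (by simpa using hi)]
      exact (Nat.le_zero.1 ((hf hi).trans_eq (Nat.find_spec hex))).symm

theorem LatticeWord.exists_part_eq_shape {w : List ℕ} (hw : LatticeWord 0 w) :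
    ∃ lam : Multiset ℕ, 0 ∉ lam ∧ part lam = shape 0 w := by
  refine exists_part_eq hw.antitone_shape (n := w.sum + 1) ?_
  rw [shape_apply, Pi.zero_apply, zero_add]
  exact List.count_eq_zero_of_not_mem fun h => (List.le_sum_of_mem h).not_gt w.sum.lt_succ_self

namespace SkewShape

open LatticeWord

theorem sum_rows (A : SkewShape) : A.rows.sum = A.size :=
  (Finset.card_eq_sum_card_image Prod.fst A.cells).symm

theorem rowEquitable_iff {A : SkewShape} : A.RowEquitable ↔ IsEquitable A.rows := by
  simp [RowEquitable, IsEquitable, rows]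

theorem IsPath.rows_eq {A : SkewShape} {L : List (ℕ × ℕ)} (hL : A.IsPath L) :
    A.rows = (L.map Prod.fst).toFinset.val.map (L.map Prod.fst).count := by
  have hset : A.rowSet = (L.map Prod.fst).toFinset := by
    rw [rowSet, hL.cells_eq]
    ext
    simp
  rw [rows, hset]
  refine Multiset.map_congr rfl fun i _ => ?_
  rw [rowLen, hL.cells_eq, card_filter_eq_count_map (RibbonStep.nodup hL.isChain)]

/-- The ribbons whose rows have, from top to bottom, the lengths `l`. -/
def IsRibbonWithRows (A : SkewShape) (l : List ℕ) : Prop :=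
  0 ∉ l ∧ l ≠ [] ∧ ∃ L, A.IsPath L ∧ ascents (L.map Prod.fst) = rowPattern l

theorem Ribbon.exists_isRibbonWithRows {A : SkewShape} (hA : A.Ribbon) :
    ∃ l, A.IsRibbonWithRows l := by
  obtain ⟨L, hL⟩ := hA.exists_isPath
  obtain ⟨l, h0, hne, hl⟩ := exists_rowPattern_eq (ascents (L.map Prod.fst))
  exact ⟨l, h0, hne, L, hL, hl.symm⟩

theorem exists_isRibbonWithRows {l : List ℕ} (h0 : 0 ∉ l) (hne : l ≠ []) :
    ∃ R : SkewShape, R.IsRibbonWithRows l := by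
  obtain ⟨L, hLne, hchain, hL⟩ := RibbonStep.exists_isChain_ascents_eq (rowPattern l)
  obtain ⟨R, hR⟩ := exists_isPath_of_isChain hchain hLne
  exact ⟨R, h0, hne, L, hR, hL⟩

namespace IsRibbonWithRows

variable {A : SkewShape} {l : List ℕ} {lam : Multiset ℕ} (hA : A.IsRibbonWithRows l)
include hA

theorem ribbon : A.Ribbon :=
  let ⟨_, _, _, hL, _⟩ := hA
  hL.ribbon

theorem rows_eq : A.rows = l := by
  obtain ⟨h0, hne, L, hL, hl⟩ := hA
  rw [hL.rows_eq]
  refine map_count_toFinset_of_steps_eq ?_ h0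
    ((ascents_eq_rowPattern_iff (by simp [hL.ne_nil]) hne).1 hl)
  exact List.pairwise_map.2
    ((RibbonStep.isChain_precedes hL.isChain).pairwise.imp fun h => h.1)

theorem size_eq : A.size = l.sum := by
  rw [← sum_rows, hA.rows_eq, Multiset.sum_coe]

theorem rowEquitable_iff : A.RowEquitable ↔ IsEquitable l := by
  rw [SkewShape.rowEquitable_iff, hA.rows_eq]

theorem ncard_LRset (lam : Multiset ℕ) :
    (A.LRset lam).ncard = (words (rowPattern l) (part lam)).ncard := by
  obtain ⟨-, -, L, hL, hl⟩ := hA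
  rw [hL.ncard_LRset, hl]

theorem mem_supp_iff : lam ∈ A.supp ↔ 0 ∉ lam ∧ (words (rowPattern l) (part lam)).Nonempty := by
  obtain ⟨-, -, L, hL, hl⟩ := hA
  rw [hL.mem_supp_iff, hl]

theorem part_last_add_one_lt_of_mem_supp (hl : ¬ IsEquitable l) (hlam : lam ∈ A.supp) :
    part lam (l.length - 1) + 1 < part lam 0 := by
  obtain ⟨-, w, hne, hw, hasc, hshape⟩ := hA.mem_supp_iff.1 hlam
  rw [← hshape]
  exact shape_last_add_one_lt_of_not_isEquitable hA.1 hl hw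
    ((ascents_eq_rowPattern_iff hne hA.2.1).1 hasc)

theorem exists_mem_supp_of_isEquitable (hl : IsEquitable l) :
    ∃ lam ∈ A.supp, part lam 0 ≤ part lam (l.length - 1) + 1 := by
  obtain ⟨w, _, ⟨hne, hw, hasc, rfl⟩, hle⟩ := exists_word_of_isEquitable hA.1 hA.2.1 hl
  obtain ⟨lam, h0, hlam⟩ := hw.exists_part_eq_shape
  exact ⟨lam, hA.mem_supp_iff.2 ⟨h0, w, hne, hw, hasc, hlam.symm⟩, hlam ▸ hle⟩

theorem supp_ssubset {R : SkewShape} {l' : List ℕ} (hR : R.IsRibbonWithRows l')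
    (hlen : l'.length = l.length) (hl : ¬ IsEquitable l) (hl' : IsEquitable l')
    (hle : PatternLE (rowPattern l) (rowPattern l')) : A.supp ⊂ R.supp := by
  refine (Set.ssubset_iff_of_subset fun lam hlam => ?_).2 ?_
  · obtain ⟨h0, hw⟩ := hA.mem_supp_iff.1 hlam
    exact hR.mem_supp_iff.2 ⟨h0, hle.nonempty hw⟩
  · obtain ⟨lam, hlam, hpart⟩ := hR.exists_mem_supp_of_isEquitable hl'
    rw [hlen] at hpart
    exact ⟨lam, hlam, fun h => hpart.not_gt (hA.part_last_add_one_lt_of_mem_supp hl h)⟩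

end IsRibbonWithRows

end SkewShape

/-- If `A` is a ribbon that is not row equitable, then there exists
a row equitable ribbon `R` of the same size such that `s_R − s_A` is
Schur-positive and `supp A` is strictly contained in `supp R`. -/
theorem exists_rowEquitable_ribbon_above (A : SkewShape)
    (hA : A.Ribbon) (h : ¬ A.RowEquitable) :
    ∃ R : SkewShape, R.Ribbon ∧ R.RowEquitable ∧ R.size = A.size ∧
      R.SchurPosDiff A ∧ A.supp ⊂ R.supp := by
  obtain ⟨l, hAl⟩ := hA.exists_isRibbonWithRows
  rw [hAl.rowEquitable_iff] at h
  obtain ⟨l', h0, hlen, hsum, hl', hle⟩ :=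
    LatticeWord.exists_isEquitable_patternLE hAl.1
  obtain ⟨R, hR⟩ := SkewShape.exists_isRibbonWithRows h0
    (List.ne_nil_of_length_pos (hlen ▸ List.length_pos_of_ne_nil hAl.2.1))
  refine ⟨R, hR.ribbon, hR.rowEquitable_iff.2 hl', ?_, fun lam => ?_,
    hAl.supp_ssubset hR hlen h hl' hle⟩
  · rw [hR.size_eq, hAl.size_eq, hsum]
  · rw [hAl.ncard_LRset, hR.ncard_LRset]
    exact hle (part lam)
end
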